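/- Let (f̄,A) be a random GL(d,ℝ)-valued cocycle over an ergodic random transformation f̄ of X̄ = Ω×X. Then there exists a measurable map P : X → SL±(d,ℝ) (matrices of determinant ±1) such that the cohomologous random cocycle (f̄,B) given by B_i(x) = P(f_i(x))⁻¹ A_i(x) P(x) has the property that every (f̄,B)-invariant probability measure μ̂ on X × ℙ(ℝ^d) is a product measure, i.e. μ̂ = μ × ν for some probability measure ν on the projective space ℙ(ℝ^d). -/

import Mathlib

open MeasureTheory Filter
open scoped ENNReal

/-- Matrices are measurable as functions of their entries. -/
instance matrixMeasurableSpace {m n α : Type*} [MeasurableSpace α] :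
    MeasurableSpace (Matrix m n α) :=
  show MeasurableSpace (m → n → α) from inferInstance

/-- The shift map on two-sided sequences. -/
def shift {Y : Type*} (ω : ℤ → Y) : ℤ → Y := fun n => ω (n + 1)

/-- The skew-shift `f̄(ω,x) = (θω, f_{ω₀}(x))` of a random transformation. -/
def fbar {Y X : Type*} (f : Y → X → X) : (ℤ → Y) × X → (ℤ → Y) × X :=
  fun q => (shift q.1, f (q.1 0) q.2)

/-- The locally constant map `Ā(ω,x) = A_{ω₀}(x)` defining a random cocycle. -/
def Abar {Y X G : Type*} (A : Y → X → G) : (ℤ → Y) × X → G := fun q => A (q.1 0) q.2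

/-- Iterates of a cocycle: `cocycleIter T A n z = A(T^{n-1} z) ⋯ A(T z) A(z)`. -/
def cocycleIter {Z G : Type*} [Monoid G] (T : Z → Z) (A : Z → G) : ℕ → Z → G
  | 0, _ => 1
  | n + 1, z => cocycleIter T A n (T z) * A z

/-- `Pr` is the two-sided Bernoulli product measure `p^ℤ` on `ℤ → Y`: the measure of
every cylinder is the corresponding product of `p`-measures. -/
def IsBernoulli {Y : Type*} [MeasurableSpace Y] (p : Measure Y)
    (Pr : Measure (ℤ → Y)) : Prop :=
  ∀ (s : Finset ℤ) (t : ℤ → Set Y), (∀ i ∈ s, MeasurableSet (t i)) →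
    Pr {ω | ∀ i ∈ s, ω i ∈ t i} = ∏ i ∈ s, p (t i)

/-- The projective space of `ℝ^d`. -/
abbrev Proj (d : ℕ) := Projectivization ℝ (Fin d → ℝ)

noncomputable instance (d : ℕ) : MeasurableSpace (Proj d) :=
  show MeasurableSpace (Quotient _) from inferInstance

lemma glInjective {d : ℕ} (A : GL (Fin d) ℝ) :
    Function.Injective (Matrix.toLin' (A : Matrix (Fin d) (Fin d) ℝ)) := by
  have h : Function.LeftInverse
      (Matrix.toLin' (((A⁻¹ : GL (Fin d) ℝ)) : Matrix (Fin d) (Fin d) ℝ))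
      (Matrix.toLin' ((A : Matrix (Fin d) (Fin d) ℝ))) := by
    intro v
    rw [← Matrix.toLin'_mul_apply]
    have h1 : ((A⁻¹ : GL (Fin d) ℝ) : Matrix (Fin d) (Fin d) ℝ) *
        (A : Matrix (Fin d) (Fin d) ℝ) = 1 := by
      exact_mod_cast A.inv_mul
    rw [h1]
    simp
  exact h.injective

/-- The projective action of an invertible matrix on `ℙ(ℝ^d)`. -/
noncomputable def projAction {d : ℕ} (A : GL (Fin d) ℝ) : Proj d → Proj d :=
  Projectivization.map (Matrix.toLin' (A : Matrix (Fin d) (Fin d) ℝ)) (glInjective A)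

namespace RandomCocycle

open Topology Set

section

variable {d : ℕ}

noncomputable instance : TopologicalSpace (Proj d) :=
  show TopologicalSpace (Quotient _) from inferInstance

theorem isOpenQuotientMap_mk :
    IsOpenQuotientMap (Projectivization.mk' ℝ : {v : Fin d → ℝ // v ≠ 0} → Proj d) where
  surjective := Quotient.mk_surjective
  continuous := continuous_quotient_mk'
  isOpenMap := by
    intro U hU
    have hq : IsQuotientMap (Projectivization.mk' ℝ : {v : Fin d → ℝ // v ≠ 0} → Proj d) :=
      isQuotientMap_quot_mk
    rw [← hq.isOpen_preimage]
    have : (Projectivization.mk' ℝ : {v : Fin d → ℝ // v ≠ 0} → Proj d) ⁻¹'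
        (Projectivization.mk' ℝ '' U) =
        ⋃ a : ℝˣ, (fun v : {v : Fin d → ℝ // v ≠ 0} =>
          (⟨a • v.1, (smul_ne_zero_iff_ne a).2 v.2⟩ : {v : Fin d → ℝ // v ≠ 0})) ⁻¹' U := by
      ext v
      simp only [mem_preimage, mem_image, mem_iUnion]
      constructor
      · rintro ⟨w, hw, h⟩
        rw [Projectivization.mk'_eq_mk, Projectivization.mk'_eq_mk,
          Projectivization.mk_eq_mk_iff] at h
        obtain ⟨a, ha⟩ := h
        refine ⟨a, ?_⟩
        convert hw
      · rintro ⟨a, ha⟩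
        refine ⟨_, ha, ?_⟩
        rw [Projectivization.mk'_eq_mk, Projectivization.mk'_eq_mk,
          Projectivization.mk_eq_mk_iff]
        exact ⟨a, rfl⟩
    rw [this]
    refine isOpen_iUnion fun a => hU.preimage ?_
    exact (continuous_subtype_val.const_smul a).subtype_mk _

/-- The rank-one orthogonal projection onto the line spanned by a nonzero vector. -/
noncomputable def rankOneProj (v : {v : Fin d → ℝ // v ≠ 0}) : Matrix (Fin d) (Fin d) ℝ :=
  (v.1 ⬝ᵥ v.1)⁻¹ • Matrix.vecMulVec v.1 v.1

theorem continuous_rankOneProj : Continuous (rankOneProj (d := d)) := by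
  have hdot : Continuous fun v : {v : Fin d → ℝ // v ≠ 0} => v.1 ⬝ᵥ v.1 :=
    Continuous.dotProduct continuous_subtype_val continuous_subtype_val
  have hvec : Continuous fun v : {v : Fin d → ℝ // v ≠ 0} => Matrix.vecMulVec v.1 v.1 :=
    Continuous.matrix_vecMulVec continuous_subtype_val continuous_subtype_val
  exact (hdot.inv₀ fun v h => v.2 (dotProduct_self_eq_zero.1 h)).smul hvec

theorem rankOneProj_mulVec (v : {v : Fin d → ℝ // v ≠ 0}) (w : Fin d → ℝ) :
    (rankOneProj v).mulVec w = ((v.1 ⬝ᵥ v.1)⁻¹ * (v.1 ⬝ᵥ w)) • v.1 := by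
  ext i
  simp [rankOneProj, Matrix.smul_mulVec, Matrix.vecMulVec_mulVec]
  ring

instance : T2Space (Proj d) := by
  have hinv : ∀ a b : {v : Fin d → ℝ // v ≠ 0},
      Projectivization.mk' ℝ a = Projectivization.mk' ℝ b → rankOneProj a = rankOneProj b := by
    rintro ⟨v, hv⟩ ⟨w, hw⟩ h
    rw [Projectivization.mk'_eq_mk, Projectivization.mk'_eq_mk,
      Projectivization.mk_eq_mk_iff'] at h
    obtain ⟨a, rfl⟩ := h
    have ha : a ≠ 0 := by rintro rfl; simp at hv
    simp only [rankOneProj, Matrix.vecMulVec_smul, Matrix.smul_vecMulVec, smul_smul,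
      dotProduct_smul, smul_dotProduct, smul_eq_mul]
    congr 1
    field_simp
  let F : Proj d → Matrix (Fin d) (Fin d) ℝ :=
    Quotient.lift rankOneProj fun a b h => hinv a b (Quotient.sound h)
  have hF : Continuous F := continuous_rankOneProj.quotient_lift _
  refine T2Space.of_injective_continuous (f := F) ?_ hF
  intro p q
  induction p using Quotient.inductionOn with | _ v
  induction q using Quotient.inductionOn with | _ w
  intro h
  change rankOneProj v = rankOneProj w at h
  have h1 := congrArg (fun M => M.mulVec v.1) h
  simp only [rankOneProj_mulVec] at h1
  rw [inv_mul_cancel₀ (fun h => v.2 (dotProduct_self_eq_zero.1 h)), one_smul] at h1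
  change Projectivization.mk ℝ v.1 v.2 = Projectivization.mk ℝ w.1 w.2
  rw [Projectivization.mk_eq_mk_iff']
  exact ⟨_, h1.symm⟩

instance : SecondCountableTopology (Proj d) :=
  (isOpenQuotientMap_mk (d := d)).isQuotientMap.secondCountableTopology
    (isOpenQuotientMap_mk (d := d)).isOpenMap

instance : CompactSpace (Proj d) := by
  let g : Metric.sphere (0 : Fin d → ℝ) 1 → Proj d := fun v =>
    Projectivization.mk' ℝ ⟨v.1, ne_zero_of_mem_unit_sphere v⟩
  have hg : Continuous g :=
    isOpenQuotientMap_mk.continuous.comp (continuous_subtype_val.subtype_mk _)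
  have hs : Function.Surjective g := by
    intro p
    induction p using Projectivization.ind with | _ v hv
    refine ⟨⟨‖v‖⁻¹ • v, by simp [norm_smul, hv]⟩, ?_⟩
    simp only [g]
    rw [Projectivization.mk'_eq_mk, Projectivization.mk_eq_mk_iff']
    exact ⟨_, rfl⟩
  exact hs.compactSpace hg

instance : BorelSpace (Proj d) := by
  have : PolishSpace {v : Fin d → ℝ // v ≠ 0} :=
    (isOpen_ne (x := (0 : Fin d → ℝ))).polishSpace
  have : T0Space (Quotient (projectivizationSetoid ℝ (Fin d → ℝ))) :=
    inferInstanceAs (T0Space (Proj d))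
  have : SecondCountableTopology (Quotient (projectivizationSetoid ℝ (Fin d → ℝ))) :=
    inferInstanceAs (SecondCountableTopology (Proj d))
  exact Quotient.borelSpace (s := projectivizationSetoid ℝ (Fin d → ℝ))

instance : StandardBorelSpace (Proj d) := by
  let _ : MetricSpace (Proj d) := TopologicalSpace.metrizableSpaceMetric (Proj d)
  have : PolishSpace (Proj d) := inferInstance
  infer_instance

noncomputable instance : MulAction (GL (Fin d) ℝ) (Proj d) where
  smul := projAction
  one_smul p := by
    induction p using Projectivization.ind with | _ v hv
    change projAction 1 (Projectivization.mk ℝ v hv) = _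
    simp [projAction, Projectivization.map_mk]
  mul_smul g h p := by
    induction p using Projectivization.ind with | _ v hv
    change projAction (g * h) (Projectivization.mk ℝ v hv) =
      projAction g (projAction h (Projectivization.mk ℝ v hv))
    simp [projAction, Projectivization.map_mk]

theorem mulVec_ne_zero (g : GL (Fin d) ℝ) {v : Fin d → ℝ} (hv : v ≠ 0) :
    g.1.mulVec v ≠ 0 := by
  intro h
  exact hv (glInjective g (by simpa using h))

theorem smul_mk (g : GL (Fin d) ℝ) (v : Fin d → ℝ) (hv : v ≠ 0) :
    g • (Projectivization.mk ℝ v hv : Proj d) =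
      Projectivization.mk ℝ (g.1.mulVec v) (mulVec_ne_zero g hv) := rfl

instance : ContinuousSMul (GL (Fin d) ℝ) (Proj d) where
  continuous_smul := by
    have hq := (IsOpenQuotientMap.id (X := GL (Fin d) ℝ)).prodMap (isOpenQuotientMap_mk (d := d))
    rw [hq.isQuotientMap.continuous_iff]
    refine isOpenQuotientMap_mk.continuous.comp (Continuous.subtype_mk (p := fun v => v ≠ 0)
      (f := fun q : GL (Fin d) ℝ × {v : Fin d → ℝ // v ≠ 0} => q.1.1.mulVec q.2.1) ?_
      fun q => mulVec_ne_zero q.1 q.2.2)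
    exact (Units.continuous_val.comp continuous_fst).matrix_mulVec
      (continuous_subtype_val.comp continuous_snd)

instance : SecondCountableTopology (Matrix (Fin d) (Fin d) ℝ) :=
  inferInstanceAs (SecondCountableTopology (Fin d → Fin d → ℝ))

instance : LocallyCompactSpace (Matrix (Fin d) (Fin d) ℝ) :=
  inferInstanceAs (LocallyCompactSpace (Fin d → Fin d → ℝ))

instance : BorelSpace (Matrix (Fin d) (Fin d) ℝ) :=
  inferInstanceAs (BorelSpace (Fin d → Fin d → ℝ))

instance : T2Space (Matrix (Fin d) (Fin d) ℝ) :=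
  inferInstanceAs (T2Space (Fin d → Fin d → ℝ))

instance : SecondCountableTopology (GL (Fin d) ℝ) := by
  have : SecondCountableTopology (Matrix (Fin d) (Fin d) ℝ)ᵐᵒᵖ :=
    MulOpposite.opHomeomorph.symm.secondCountableTopology
  exact Units.isEmbedding_embedProduct.secondCountableTopology

instance : LocallyCompactSpace (GL (Fin d) ℝ) := by
  have : LocallyCompactSpace (Matrix (Fin d) (Fin d) ℝ)ᵐᵒᵖ :=
    MulOpposite.opHomeomorph.symm.isClosedEmbedding.locallyCompactSpace
  exact Units.isClosedEmbedding_embedProduct.locallyCompactSpace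

end

section

variable {d : ℕ}

/-- A self-map of projective space is quasi-linear if on every nonzero subspace it is given by a
nonzero linear map, away from the kernel of that map. -/
def IsQuasiLinear (e : Proj d → Proj d) : Prop :=
  ∀ K : Submodule ℝ (Fin d → ℝ), K ≠ ⊥ → ∃ T : (Fin d → ℝ) →ₗ[ℝ] (Fin d → ℝ),
    (∃ v ∈ K, T v ≠ 0) ∧ ∀ v (hv : v ≠ 0), v ∈ K → ∀ h : T v ≠ 0,
      e (Projectivization.mk ℝ v hv) = Projectivization.mk ℝ (T v) h

/-- The nonzero vectors whose class is fixed by a self-map of projective space. -/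
def fixedVectors (u : Proj d → Proj d) : Set (Fin d → ℝ) :=
  {v | ∃ hv : v ≠ 0, u (Projectivization.mk ℝ v hv) = Projectivization.mk ℝ v hv}

theorem exists_eq_smul_of_mk_eq {v w : Fin d → ℝ} {hv : v ≠ 0} {hw : w ≠ 0}
    (h : (Projectivization.mk ℝ v hv : Proj d) = Projectivization.mk ℝ w hw) :
    ∃ a : ℝ, a ≠ 0 ∧ v = a • w := by
  obtain ⟨a, ha⟩ := (Projectivization.mk_eq_mk_iff ℝ v w hv hw).1 h
  exact ⟨a, a.ne_zero, ha.symm⟩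

theorem exists_scalar_on {I : Submodule ℝ (Fin d → ℝ)} (L : (Fin d → ℝ) →ₗ[ℝ] (Fin d → ℝ))
    (h : ∀ v ∈ I, ∃ a : ℝ, L v = a • v) : ∃ a : ℝ, ∀ v ∈ I, L v = a • v := by
  have hmap : ∀ v ∈ I, L v ∈ I := fun v hv => by
    obtain ⟨a, ha⟩ := h v hv
    exact ha ▸ I.smul_mem a hv
  obtain ⟨a, ha⟩ := LinearMap.exists_eq_smul_id_of_forall_notLinearIndependent
    (f := L.restrict hmap) (fun v hli => by
      obtain ⟨a, ha⟩ := h v.1 v.2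
      rw [LinearIndependent.pair_iff] at hli
      have := hli a (-1) (by ext1; simp [ha])
      simp at this)
  exact ⟨a, fun v hv => by simpa using congrArg Subtype.val (LinearMap.congr_fun ha ⟨v, hv⟩)⟩

theorem injOn_of_leftInverse {φ ψ : Proj d → Proj d} (hψ : IsQuasiLinear ψ)
    {I : Submodule ℝ (Fin d → ℝ)} {T : (Fin d → ℝ) →ₗ[ℝ] (Fin d → ℝ)}
    (hT0 : ∃ v ∈ I, T v ≠ 0)
    (hT : ∀ v (hv : v ≠ 0), v ∈ I → ∀ h : T v ≠ 0,
      φ (Projectivization.mk ℝ v hv) = Projectivization.mk ℝ (T v) h)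
    (hinv : ∀ v (hv : v ≠ 0), v ∈ I →
      ψ (φ (Projectivization.mk ℝ v hv)) = Projectivization.mk ℝ v hv) :
    ∀ v ∈ I, v ≠ 0 → T v ≠ 0 := by
  obtain ⟨v₀, hv₀, hTv₀⟩ := hT0
  obtain ⟨S, ⟨w, hw, hSw⟩, hS⟩ := hψ (I.map T) (by
    intro h
    have : T v₀ ∈ I.map T := ⟨v₀, hv₀, rfl⟩
    rw [h] at this
    exact hTv₀ (by simpa using this))
  obtain ⟨v₁, hv₁, rfl⟩ := hw
  obtain ⟨a, ha⟩ := exists_scalar_on (I := I) (S ∘ₗ T) (by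
    intro v hv
    by_cases hz : S (T v) = 0
    · exact ⟨0, by simpa using hz⟩
    have hTv : T v ≠ 0 := fun h => hz (by simp [h])
    have hv0 : v ≠ 0 := fun h => hTv (by simp [h])
    have h1 := hinv v hv0 hv
    rw [hT v hv0 hv hTv, hS _ hTv ⟨v, hv, rfl⟩ hz] at h1
    obtain ⟨a, -, ha⟩ := exists_eq_smul_of_mk_eq h1
    exact ⟨a, ha⟩)
  have ha0 : a ≠ 0 := by
    rintro rfl
    exact hSw (by simpa using ha v₁ hv₁)
  intro v hv hv0 hTv
  have := ha v hv
  simp [hTv, ha0, eq_comm, hv0] at this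

theorem exists_linearMap_of_quasiLinear {u φ ψ : Proj d → Proj d} (hu : IsQuasiLinear u)
    (hφ : IsQuasiLinear φ) (hψ : IsQuasiLinear ψ) (huu : ∀ p, u (u p) = u p)
    (hinv : ∀ p, u p = p → ψ (φ p) = p) (K : Submodule ℝ (Fin d → ℝ))
    (hK : K ≤ Submodule.span ℝ (fixedVectors u ∩ K)) :
    ∃ T : (Fin d → ℝ) →ₗ[ℝ] (Fin d → ℝ), ∀ v (hv : v ≠ 0), v ∈ K →
      u (Projectivization.mk ℝ v hv) = Projectivization.mk ℝ v hv →
      ∃ h : T v ≠ 0, φ (Projectivization.mk ℝ v hv) = Projectivization.mk ℝ (T v) h := by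
  induction hn : Module.finrank ℝ K using Nat.strong_induction_on generalizing K with
  | _ n ih =>
  by_cases hKbot : K = ⊥
  · subst hKbot
    exact ⟨0, fun v hv hvK => absurd (by simpa using hvK) hv⟩
  obtain ⟨U, ⟨v₀, hv₀, hUv₀⟩, hU⟩ := hu K hKbot
  have heig : ∀ v ∈ fixedVectors u ∩ K, U v ≠ 0 → ∃ a : ℝ, a ≠ 0 ∧ U v = a • v := by
    rintro v ⟨⟨hv, hfix⟩, hvK⟩ hUv
    rw [hU v hv hvK hUv] at hfix
    exact exists_eq_smul_of_mk_eq hfix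
  have hmapK : ∀ v ∈ K, U v ∈ K := by
    have : K ≤ K.comap U := by
      refine hK.trans (Submodule.span_le.2 fun v hv => ?_)
      by_cases hUv : U v = 0
      · simp [hUv]
      · obtain ⟨a, -, ha⟩ := heig v hv hUv
        simpa [ha] using K.smul_mem a hv.2
    exact this
  have hfixU : ∀ v ∈ K, U v ≠ 0 → U v ∈ fixedVectors u ∩ K := by
    intro v hv hUv
    have hv0 : v ≠ 0 := fun h => hUv (by simp [h])
    refine ⟨⟨hUv, ?_⟩, hmapK v hv⟩
    rw [← hU v hv0 hv hUv, huu]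
  obtain ⟨a, ha⟩ := exists_scalar_on (I := K.map U) U (by
    rintro _ ⟨v, hv, rfl⟩
    by_cases hUv : U v = 0
    · exact ⟨0, by simp [hUv]⟩
    by_cases hUUv : U (U v) = 0
    · exact ⟨0, by simp [hUUv]⟩
    obtain ⟨a, -, ha⟩ := heig _ (hfixU v hv hUv) hUUv
    exact ⟨a, ha⟩)
  have hex : ∃ v ∈ fixedVectors u ∩ K, U v ≠ 0 := by
    by_contra! hcon
    have : K ≤ LinearMap.ker U := hK.trans (Submodule.span_le.2 fun v hv => hcon v hv)
    exact hUv₀ (this hv₀)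
  have hfixa : ∀ v ∈ fixedVectors u ∩ K, U v ≠ 0 → a ≠ 0 ∧ U v = a • v := by
    intro v hv hUv
    obtain ⟨b, hb, hbv⟩ := heig v hv hUv
    have h1 := ha (U v) ⟨v, hv.2, rfl⟩
    nth_rewrite 1 [hbv] at h1
    rw [map_smul] at h1
    have : a = b := (smul_left_injective ℝ hUv h1).symm
    subst this
    exact ⟨hb, hbv⟩
  have ha0 : a ≠ 0 := by
    obtain ⟨v, hv, hUv⟩ := hex
    exact (hfixa v hv hUv).1
  have hmemI : ∀ v ∈ fixedVectors u ∩ K, U v ≠ 0 → v ∈ K.map U := by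
    intro v hv hUv
    obtain ⟨-, h⟩ := hfixa v hv hUv
    exact ⟨a⁻¹ • v, K.smul_mem _ hv.2, by rw [map_smul, h, smul_smul, inv_mul_cancel₀ ha0, one_smul]⟩
  have hker : K ⊓ LinearMap.ker U ≤
      Submodule.span ℝ (fixedVectors u ∩ ↑(K ⊓ LinearMap.ker U)) := by
    intro w hw
    have hle : K ≤ K.map U ⊔ Submodule.span ℝ (fixedVectors u ∩ ↑(K ⊓ LinearMap.ker U)) := by
      refine hK.trans (Submodule.span_le.2 fun v hv => ?_)
      by_cases hUv : U v = 0
      · exact Submodule.mem_sup_right (Submodule.subset_span ⟨hv.1, hv.2, hUv⟩)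
      · exact Submodule.mem_sup_left (hmemI v hv hUv)
    obtain ⟨i, hi, s, hs, rfl⟩ := Submodule.mem_sup.1 (hle hw.1)
    have hsker : U s = 0 := by
      have : Submodule.span ℝ (fixedVectors u ∩ ↑(K ⊓ LinearMap.ker U)) ≤ LinearMap.ker U :=
        Submodule.span_le.2 fun v hv => hv.2.2
      exact this hs
    have hz : U (i + s) = 0 := hw.2
    rw [map_add, hsker, add_zero, ha i hi] at hz
    have : i = 0 := (smul_eq_zero.1 hz).resolve_left ha0
    simpa [this] using hs
  have hlt : Module.finrank ℝ ↑(K ⊓ LinearMap.ker U) < n := by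
    rw [← hn]
    refine Submodule.finrank_lt_finrank_of_lt (lt_of_le_of_ne inf_le_left fun h => ?_)
    exact hUv₀ ((inf_eq_left.1 h) hv₀)
  obtain ⟨T', hT'⟩ := ih _ hlt _ hker rfl
  have hIfix : ∀ v (hv : v ≠ 0), v ∈ K.map U →
      u (Projectivization.mk ℝ v hv) = Projectivization.mk ℝ v hv := by
    rintro _ hv ⟨w, hw, rfl⟩
    exact (hfixU w hw hv).1.2
  obtain ⟨T₁, hT₁0, hT₁⟩ := hφ (K.map U) (by
    intro h
    have : U v₀ ∈ K.map U := ⟨v₀, hv₀, rfl⟩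
    rw [h] at this
    exact hUv₀ (by simpa using this))
  have hT₁inj := injOn_of_leftInverse hψ hT₁0 hT₁ fun v hv hvI => hinv _ (hIfix v hv hvI)
  obtain ⟨R, hR⟩ : ∃ R : (Fin d → ℝ) →ₗ[ℝ] (Fin d → ℝ),
      ∀ v, R v = T₁ (a⁻¹ • U v) + T' (v - a⁻¹ • U v) :=
    ⟨T₁ ∘ₗ (a⁻¹ • U) + T' ∘ₗ (LinearMap.id - a⁻¹ • U), fun v => rfl⟩
  refine ⟨R, fun v hv hvK hfix => ?_⟩
  by_cases hUv : U v = 0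
  · have : R v = T' v := by simp [hR, hUv]
    simp only [this]
    exact hT' v hv ⟨hvK, hUv⟩ hfix
  · have hUa := (hfixa v ⟨⟨hv, hfix⟩, hvK⟩ hUv).2
    have : R v = T₁ v := by
      simp [hR, hUa, smul_smul, inv_mul_cancel₀ ha0]
    simp only [this]
    have hvI := hmemI v ⟨⟨hv, hfix⟩, hvK⟩ hUv
    exact ⟨hT₁inj v hvI hv, hT₁ v hv hvI _⟩

theorem exists_smul_eq_of_quasiLinear {φ ψ : Proj d → Proj d} (hφ : IsQuasiLinear φ)
    (hψ : IsQuasiLinear ψ) (hψφ : IsQuasiLinear (ψ ∘ φ)) (hφψ : IsQuasiLinear (φ ∘ ψ))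
    (h₁ : ∀ p, φ (ψ (φ p)) = φ p) :
    ∃ g : GL (Fin d) ℝ, ∀ p, ψ (φ p) = p → g • p = φ p := by
  set K := Submodule.span ℝ (fixedVectors (ψ ∘ φ)) with hKdef
  obtain ⟨T, hT⟩ := exists_linearMap_of_quasiLinear hψφ hφ hψ (fun p => by simp [h₁])
    (fun p hp => hp) K (Submodule.span_le.2 fun v hv =>
      Submodule.subset_span ⟨hv, Submodule.subset_span hv⟩)
  obtain ⟨S, hS⟩ := exists_linearMap_of_quasiLinear hφψ hψ hφ (fun p => by simp [h₁])
    (fun p hp => hp) (Submodule.span ℝ (fixedVectors (φ ∘ ψ)))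
    (Submodule.span_le.2 fun v hv => Submodule.subset_span ⟨hv, Submodule.subset_span hv⟩)
  have hST : ∀ v ∈ fixedVectors (ψ ∘ φ), ∃ a : ℝ, a ≠ 0 ∧ S (T v) = a • v := by
    rintro v ⟨hv, hfix⟩
    obtain ⟨hTv, hφv⟩ := hT v hv (Submodule.subset_span ⟨hv, hfix⟩) hfix
    have hfix' : (φ ∘ ψ) (Projectivization.mk ℝ (T v) hTv) = Projectivization.mk ℝ (T v) hTv := by
      rw [← hφv]; exact h₁ _
    obtain ⟨hSv, hψv⟩ := hS (T v) hTv (Submodule.subset_span ⟨hTv, hfix'⟩) hfix'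
    have : Projectivization.mk ℝ (S (T v)) hSv = Projectivization.mk ℝ v hv := by
      rw [← hψv, ← hφv]; exact hfix
    exact exists_eq_smul_of_mk_eq this
  have hmapK : ∀ v ∈ K, (S ∘ₗ T) v ∈ K := by
    have : K ≤ K.comap (S ∘ₗ T) := Submodule.span_le.2 fun v hv => by
      obtain ⟨a, -, ha⟩ := hST v hv
      simpa [ha] using K.smul_mem a (Submodule.subset_span hv)
    exact this
  have hsurj : Function.Surjective ((S ∘ₗ T).restrict hmapK) := by
    rintro ⟨w, hw⟩
    have : K ≤ K.map (S ∘ₗ T) := Submodule.span_le.2 fun v hv => by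
      obtain ⟨a, ha0, ha⟩ := hST v hv
      refine ⟨a⁻¹ • v, K.smul_mem _ (Submodule.subset_span hv), ?_⟩
      simp [ha, smul_smul, inv_mul_cancel₀ ha0]
    obtain ⟨v, hv, hvw⟩ := this hw
    exact ⟨⟨v, hv⟩, Subtype.ext hvw⟩
  have hinj : Function.Injective (T.domRestrict K) := by
    have h := LinearMap.injective_iff_surjective.2 hsurj
    intro x y hxy
    apply h
    ext1
    simpa using congrArg S hxy
  obtain ⟨e, he⟩ : ∃ e : (Fin d → ℝ) ≃ₗ[ℝ] (Fin d → ℝ), ∀ v ∈ K, e v = T v := by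
    obtain ⟨e, he⟩ := Submodule.exists_linearEquiv_restrict_eq
      (LinearEquiv.ofInjective (T.domRestrict K) hinj)
    exact ⟨e, fun v hv => by simpa using (he ⟨v, hv⟩).symm⟩
  obtain ⟨g, hg⟩ : ∃ g : GL (Fin d) ℝ, ∀ v, g.1.mulVec v = e v := by
    refine ⟨⟨LinearMap.toMatrix' e.toLinearMap, LinearMap.toMatrix' e.symm.toLinearMap, ?_, ?_⟩,
      fun v => LinearMap.toMatrix'_mulVec _ _⟩ <;>
    · rw [← LinearMap.toMatrix'_comp]
      simp
  refine ⟨g, fun p hp => ?_⟩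
  induction p using Projectivization.ind with | _ v hv
  have hvK : v ∈ K := Submodule.subset_span ⟨hv, hp⟩
  obtain ⟨hTv, hφv⟩ := hT v hv hvK hp
  rw [hφv, smul_mk]
  congr 1
  rw [hg, he v hvK]

end

section

variable {d : ℕ}

/-- The map of projective space induced by a possibly singular linear map, extended by the identity
on the projectivization of the kernel. -/
noncomputable def projMap (T : (Fin d → ℝ) →L[ℝ] (Fin d → ℝ)) (p : Proj d) : Proj d :=
  open Classical in if h : T p.rep ≠ 0 then Projectivization.mk ℝ (T p.rep) h else p

/-- The projectivization of a linear subspace. -/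
def projSet (K : Submodule ℝ (Fin d → ℝ)) : Set (Proj d) := {p | p.rep ∈ K}

theorem rep_mk_eq_smul {v : Fin d → ℝ} (hv : v ≠ 0) :
    ∃ a : ℝ, a ≠ 0 ∧ (Projectivization.mk ℝ v hv : Proj d).rep = a • v := by
  refine exists_eq_smul_of_mk_eq (hv := Projectivization.rep_nonzero _) (hw := hv) ?_
  exact Projectivization.mk_rep _

theorem mk_mem_projSet {K : Submodule ℝ (Fin d → ℝ)} {v : Fin d → ℝ} (hv : v ≠ 0) :
    Projectivization.mk ℝ v hv ∈ projSet K ↔ v ∈ K := by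
  obtain ⟨a, ha, h⟩ := rep_mk_eq_smul hv
  rw [projSet, mem_ofPred_eq, h, K.smul_mem_iff ha]

theorem projMap_mk (T : (Fin d → ℝ) →L[ℝ] (Fin d → ℝ)) {v : Fin d → ℝ} (hv : v ≠ 0)
    (h : T v ≠ 0) :
    projMap T (Projectivization.mk ℝ v hv) = Projectivization.mk ℝ (T v) h := by
  obtain ⟨a, ha, hrep⟩ := rep_mk_eq_smul hv
  have h' : T (Projectivization.mk ℝ v hv : Proj d).rep ≠ 0 := by
    rw [hrep, map_smul]; exact smul_ne_zero ha h
  rw [projMap, dif_pos h', Projectivization.mk_eq_mk_iff']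
  exact ⟨a, by rw [hrep, map_smul]⟩

theorem continuousAt_projMap {T : (Fin d → ℝ) →L[ℝ] (Fin d → ℝ)} {p : Proj d}
    (h : p ∉ projSet T.ker) :
    ContinuousAt (fun q : ((Fin d → ℝ) →L[ℝ] (Fin d → ℝ)) × Proj d => projMap q.1 q.2) (T, p) := by
  induction p using Projectivization.ind with | _ v hv
  have hTv : T v ≠ 0 := by rwa [mk_mem_projSet] at h
  have hq := (IsOpenQuotientMap.id (X := (Fin d → ℝ) →L[ℝ] (Fin d → ℝ))).prodMap
    (isOpenQuotientMap_mk (d := d))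
  refine (hq.continuousAt_comp_iff (x := (T, ⟨v, hv⟩))).1 ?_
  have hev : Continuous fun q : ((Fin d → ℝ) →L[ℝ] (Fin d → ℝ)) × {v : Fin d → ℝ // v ≠ 0} =>
      q.1 q.2.1 := continuous_fst.clm_apply (continuous_subtype_val.comp continuous_snd)
  have hopen := (isOpen_ne (x := (0 : Fin d → ℝ))).preimage hev
  refine ContinuousOn.continuousAt (s := _) ?_ (hopen.mem_nhds hTv)
  rw [continuousOn_iff_continuous_domRestrict]
  have : Continuous fun q : ((fun q : ((Fin d → ℝ) →L[ℝ] (Fin d → ℝ)) ×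
      {v : Fin d → ℝ // v ≠ 0} => q.1 q.2.1) ⁻¹' {y | y ≠ 0} : Set _) =>
      (Projectivization.mk' ℝ ⟨q.1.1 q.1.2.1, q.2⟩ : Proj d) :=
    isOpenQuotientMap_mk.continuous.comp ((hev.comp continuous_subtype_val).subtype_mk _)
  convert this using 1
  ext q
  exact projMap_mk _ _ _

theorem isClosed_projSet (K : Submodule ℝ (Fin d → ℝ)) : IsClosed (projSet K) := by
  rw [← isOpenQuotientMap_mk.isQuotientMap.isClosed_preimage]
  have : (Projectivization.mk' ℝ : {v : Fin d → ℝ // v ≠ 0} → Proj d) ⁻¹' projSet K =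
      Subtype.val ⁻¹' (K : Set (Fin d → ℝ)) := by
    ext v
    exact mk_mem_projSet v.2
  rw [this]
  exact K.closed_of_finiteDimensional.preimage continuous_subtype_val

theorem measurable_projMap (T : (Fin d → ℝ) →L[ℝ] (Fin d → ℝ)) : Measurable (projMap T) := by
  refine measurable_of_restrict_of_restrict_compl
    (isClosed_projSet T.ker).measurableSet ?_ ?_
  · have : (projSet T.ker).domRestrict (projMap T) = Subtype.val := by
      ext ⟨p, hp⟩
      have : T p.rep = 0 := hp
      simp [projMap, this]
    rw [this]
    exact measurable_subtype_coe
  · refine Continuous.measurable (continuousOn_iff_continuous_domRestrict.1 fun p hp => ?_)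
    exact ((continuousAt_projMap hp).comp
      (Continuous.prodMk_right T).continuousAt).continuousWithinAt

/-- The continuous linear map given by an invertible matrix. -/
noncomputable def glMap (g : GL (Fin d) ℝ) : (Fin d → ℝ) →L[ℝ] (Fin d → ℝ) :=
  (Matrix.mulVecLin g.1).toContinuousLinearMap

theorem glMap_apply (g : GL (Fin d) ℝ) (v : Fin d → ℝ) : glMap g v = g.1.mulVec v := rfl

theorem exists_limit_linearMap (U : Ultrafilter (GL (Fin d) ℝ)) (K : Submodule ℝ (Fin d → ℝ))
    (hK : K ≠ ⊥) :
    ∃ (L : GL (Fin d) ℝ → (Fin d → ℝ) →L[ℝ] (Fin d → ℝ)) (T : (Fin d → ℝ) →L[ℝ] (Fin d → ℝ)),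
      (∀ g, ∀ p ∈ projSet K, g • p = projMap (L g) p) ∧ Tendsto L U (𝓝 T) ∧
        ∃ v ∈ K, T v ≠ 0 := by
  obtain ⟨π, hπ⟩ := LinearMap.exists_leftInverse_of_injective K.subtype (by simp)
  obtain ⟨Q, hQ⟩ : ∃ Q : (Fin d → ℝ) →L[ℝ] (Fin d → ℝ), ∀ v, Q v = π v :=
    ⟨(K.subtype ∘ₗ π).toContinuousLinearMap, fun v => rfl⟩
  have hQK : ∀ v ∈ K, Q v = v := fun v hv => by
    rw [hQ]
    exact congrArg Subtype.val (LinearMap.congr_fun hπ ⟨v, hv⟩)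
  obtain ⟨v, hv, hv0⟩ := K.ne_bot_iff.1 hK
  have hne : ∀ g : GL (Fin d) ℝ, glMap g ∘L Q ≠ 0 := fun g h => by
    have := congrArg (fun M => M v) h
    simp only [ContinuousLinearMap.comp_apply, hQK v hv] at this
    exact mulVec_ne_zero g hv0 this
  set L : GL (Fin d) ℝ → (Fin d → ℝ) →L[ℝ] (Fin d → ℝ) :=
    fun g => ‖glMap g ∘L Q‖⁻¹ • (glMap g ∘L Q) with hL
  have hnorm : ∀ g, L g ∈ Metric.sphere (0 : (Fin d → ℝ) →L[ℝ] (Fin d → ℝ)) 1 := fun g => by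
    simp only [hL, mem_sphere_zero_iff_norm, norm_smul, norm_inv, norm_norm]
    exact inv_mul_cancel₀ (norm_ne_zero_iff.2 (hne g))
  have hproper : ProperSpace ((Fin d → ℝ) →L[ℝ] (Fin d → ℝ)) := FiniteDimensional.proper_real _
  obtain ⟨T, hT1, hT⟩ := (isCompact_sphere (0 : (Fin d → ℝ) →L[ℝ] (Fin d → ℝ)) 1)
    |>.ultrafilter_le_nhds (U.map L) (by
      rw [Filter.le_principal_iff]
      exact Filter.mem_map.2 (Filter.univ_mem' hnorm))
  have hT : Tendsto L U (𝓝 T) := hT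
  refine ⟨L, T, fun g p hp => ?_, hT, ?_⟩
  · induction p using Projectivization.ind with | _ w hw
    rw [mk_mem_projSet] at hp
    have hLw : L g w = ‖glMap g ∘L Q‖⁻¹ • g.1.mulVec w := by
      simp [hL, hQK w hp, glMap_apply]
    have hc : ‖glMap g ∘L Q‖⁻¹ ≠ 0 := inv_ne_zero (norm_ne_zero_iff.2 (hne g))
    have hLw0 : L g w ≠ 0 := by
      rw [hLw]
      exact smul_ne_zero hc (mulVec_ne_zero g hw)
    rw [projMap_mk _ hw hLw0, smul_mk, eq_comm, Projectivization.mk_eq_mk_iff']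
    exact ⟨_, hLw.symm⟩
  · have hTQ : T ∘L Q = T := by
      refine tendsto_nhds_unique (f := fun g => L g ∘L Q) (l := (U : Filter (GL (Fin d) ℝ))) ?_ ?_
      · exact (((continuous_id.clm_comp continuous_const).tendsto T).comp hT)
      · convert hT using 2 with g
        ext1 w
        simp [hL, hQK (Q w) (by rw [hQ]; exact (π w).2)]
    have hT0 : T ≠ 0 := by
      rintro rfl
      simp at hT1
    obtain ⟨w, hw⟩ : ∃ w, T w ≠ 0 := by
      by_contra! hcon
      exact hT0 (ContinuousLinearMap.ext hcon)
    refine ⟨Q w, by rw [hQ]; exact (π w).2, ?_⟩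
    rwa [← ContinuousLinearMap.comp_apply, hTQ]

theorem exists_projMap_eq_of_tendsto {U : Ultrafilter (GL (Fin d) ℝ)} {e : Proj d → Proj d}
    (he : ∀ p, Tendsto (fun g : GL (Fin d) ℝ => g • p) U (𝓝 (e p)))
    (K : Submodule ℝ (Fin d → ℝ)) (hK : K ≠ ⊥) :
    ∃ (L : GL (Fin d) ℝ → (Fin d → ℝ) →L[ℝ] (Fin d → ℝ)) (T : (Fin d → ℝ) →L[ℝ] (Fin d → ℝ)),
      (∀ g, ∀ p ∈ projSet K, g • p = projMap (L g) p) ∧ Tendsto L U (𝓝 T) ∧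
        (∃ v ∈ K, T v ≠ 0) ∧ ∀ p ∈ projSet K, p ∉ projSet T.ker → e p = projMap T p := by
  obtain ⟨L, T, hL, hT, hv⟩ := exists_limit_linearMap U K hK
  refine ⟨L, T, hL, hT, hv, fun p hp hpT => tendsto_nhds_unique (he p) ?_⟩
  simp only [hL _ p hp]
  exact ((continuousAt_projMap hpT).comp (f := fun A => (A, p))
    (Continuous.prodMk_left p).continuousAt).tendsto.comp hT

theorem isQuasiLinear_of_tendsto {U : Ultrafilter (GL (Fin d) ℝ)} {e : Proj d → Proj d}
    (he : ∀ p, Tendsto (fun g : GL (Fin d) ℝ => g • p) U (𝓝 (e p))) : IsQuasiLinear e := by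
  intro K hK
  obtain ⟨L, T, -, -, hv, h⟩ := exists_projMap_eq_of_tendsto he K hK
  refine ⟨T, hv, fun v hv hvK hTv => ?_⟩
  rw [h _ ((mk_mem_projSet hv).2 hvK) (fun h => hTv ((mk_mem_projSet hv).1 h))]
  exact projMap_mk _ _ _

theorem measurable_of_tendsto {U : Ultrafilter (GL (Fin d) ℝ)} {e : Proj d → Proj d}
    (he : ∀ p, Tendsto (fun g : GL (Fin d) ℝ => g • p) U (𝓝 (e p))) : Measurable e := by
  suffices h : ∀ K : Submodule ℝ (Fin d → ℝ), ∀ S, MeasurableSet S →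
      MeasurableSet (projSet K ∩ e ⁻¹' S) by
    intro S hS
    have := h ⊤ S hS
    rwa [show projSet (⊤ : Submodule ℝ (Fin d → ℝ)) = univ from eq_univ_of_forall fun p => trivial,
      univ_inter] at this
  intro K S hS
  induction hn : Module.finrank ℝ K using Nat.strong_induction_on generalizing K with
  | _ n ih =>
  by_cases hK : K = ⊥
  · subst hK
    have : projSet (⊥ : Submodule ℝ (Fin d → ℝ)) = ∅ :=
      eq_empty_of_forall_notMem fun p hp => p.rep_nonzero hp
    simp [this]
  obtain ⟨L, T, -, -, ⟨v, hv, hTv⟩, h⟩ := exists_projMap_eq_of_tendsto he K hK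
  have hlt : Module.finrank ℝ ↑(K ⊓ T.ker) < n := by
    rw [← hn]
    refine Submodule.finrank_lt_finrank_of_lt (lt_of_le_of_ne inf_le_left fun h => ?_)
    exact hTv ((inf_eq_left.1 h) hv)
  have h1 := ih _ hlt _ rfl
  have : projSet K ∩ e ⁻¹' S = (projSet (K ⊓ T.ker) ∩ e ⁻¹' S) ∪
      ((projSet K \ projSet T.ker) ∩ projMap T ⁻¹' S) := by
    ext p
    by_cases hp : p ∈ projSet K
    · by_cases hpT : p ∈ projSet T.ker
      · have : p ∈ projSet (K ⊓ T.ker) := ⟨hp, hpT⟩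
        simp [hp, hpT, this]
      · have : p ∉ projSet (K ⊓ T.ker) := fun h => hpT h.2
        simp [hp, hpT, this, h p hp hpT]
    · have : p ∉ projSet (K ⊓ T.ker) := fun h => hp h.1
      simp [hp, this]
  rw [this]
  exact h1.union (((isClosed_projSet K).measurableSet.diff
    (isClosed_projSet T.ker).measurableSet).inter (measurable_projMap T hS))

theorem tendsto_integral_smul {U : Ultrafilter (GL (Fin d) ℝ)} {e : Proj d → Proj d}
    (he : ∀ p, Tendsto (fun g : GL (Fin d) ℝ => g • p) U (𝓝 (e p))) (f : C(Proj d, ℝ))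
    (ν : Measure (Proj d)) [IsFiniteMeasure ν] :
    Tendsto (fun g : GL (Fin d) ℝ => ∫ p, f (g • p) ∂ν) U (𝓝 (∫ p, f (e p) ∂ν)) := by
  have hbound : ∀ p, ‖f p‖ ≤ ‖f‖ := f.norm_coe_le_norm
  have hint : ∀ k : Proj d → Proj d, Measurable k → Integrable (fun p => f (k p)) ν := fun k hk =>
    Integrable.of_bound (f.continuous.measurable.comp hk).aestronglyMeasurable ‖f‖
      (ae_of_all _ fun p => hbound _)
  have hsmul : ∀ g : GL (Fin d) ℝ, Measurable fun p : Proj d => g • p := fun g =>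
    (continuous_const_smul g).measurable
  suffices h : ∀ K : Submodule ℝ (Fin d → ℝ),
      Tendsto (fun g : GL (Fin d) ℝ => ∫ p in projSet K, f (g • p) ∂ν) U
        (𝓝 (∫ p in projSet K, f (e p) ∂ν)) by
    have := h ⊤
    rwa [show projSet (⊤ : Submodule ℝ (Fin d → ℝ)) = univ from eq_univ_of_forall fun p => trivial,
      Measure.restrict_univ] at this
  intro K
  induction hn : Module.finrank ℝ K using Nat.strong_induction_on generalizing K with
  | _ n ih =>
  by_cases hK : K = ⊥
  · subst hK
    have : projSet (⊥ : Submodule ℝ (Fin d → ℝ)) = ∅ :=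
      eq_empty_of_forall_notMem fun p hp => p.rep_nonzero hp
    simp [this]
  obtain ⟨L, T, hL, hT, ⟨v, hv, hTv⟩, h⟩ := exists_projMap_eq_of_tendsto he K hK
  have hlt : Module.finrank ℝ ↑(K ⊓ T.ker) < n := by
    rw [← hn]
    refine Submodule.finrank_lt_finrank_of_lt (lt_of_le_of_ne inf_le_left fun h => ?_)
    exact hTv ((inf_eq_left.1 h) hv)
  have h1 := ih _ hlt _ rfl
  have hsplit : projSet K = projSet (K ⊓ T.ker) ∪ (projSet K \ projSet T.ker) := by
    ext p
    simp [projSet]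
    tauto
  have hdisj : Disjoint (projSet (K ⊓ T.ker)) (projSet K \ projSet T.ker) :=
    disjoint_left.2 fun p hp hp' => hp'.2 hp.2
  have hmeas : MeasurableSet (projSet K \ projSet T.ker) :=
    (isClosed_projSet K).measurableSet.diff (isClosed_projSet T.ker).measurableSet
  have hunion : ∀ k : Proj d → Proj d, Measurable k → ∫ p in projSet K, f (k p) ∂ν =
      ∫ p in projSet (K ⊓ T.ker), f (k p) ∂ν + ∫ p in projSet K \ projSet T.ker, f (k p) ∂ν := by
    intro k hk
    nth_rewrite 1 [hsplit]
    exact setIntegral_union hdisj hmeas (hint k hk).integrableOn (hint k hk).integrableOn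
  simp only [hunion _ (hsmul _), hunion e (measurable_of_tendsto he)]
  refine h1.add ?_
  have h2 : ∀ g : GL (Fin d) ℝ, ∫ p in projSet K \ projSet T.ker, f (g • p) ∂ν =
      ∫ p in projSet K \ projSet T.ker, f (projMap (L g) p) ∂ν := fun g =>
    setIntegral_congr_fun hmeas fun p hp => by simp only [hL g p hp.1]
  have h3 : ∫ p in projSet K \ projSet T.ker, f (e p) ∂ν =
      ∫ p in projSet K \ projSet T.ker, f (projMap T p) ∂ν :=
    setIntegral_congr_fun hmeas fun p hp => by simp only [h p hp.1 hp.2]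
  simp only [h2, h3]
  have hcont : ContinuousAt
      (fun A => ∫ p in projSet K \ projSet T.ker, f (projMap A p) ∂ν) T := by
    refine continuousAt_of_dominated (bound := fun _ => ‖f‖) ?_ ?_ (integrable_const _) ?_
    · exact Eventually.of_forall fun A =>
        (f.continuous.measurable.comp (measurable_projMap A)).aestronglyMeasurable
    · exact Eventually.of_forall fun A => ae_of_all _ fun p => hbound _
    · refine (ae_restrict_iff' hmeas).2 (ae_of_all _ fun p hp => ?_)
      exact f.continuous.continuousAt.comp ((continuousAt_projMap hp.2).comp (f := fun A => (A, p))
        (Continuous.prodMk_left p).continuousAt)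
  exact hcont.tendsto.comp hT

end

section

variable {d : ℕ}

theorem measurable_smul_proj (g : GL (Fin d) ℝ) : Measurable fun p : Proj d => g • p :=
  (continuous_const_smul g).measurable

noncomputable instance : MulAction (GL (Fin d) ℝ) (ProbabilityMeasure (Proj d)) where
  smul g ν := ν.map (f := fun p => g • p) (measurable_smul_proj g).aemeasurable
  one_smul ν := by
    refine Subtype.ext ?_
    change Measure.map (fun p : Proj d => (1 : GL (Fin d) ℝ) • p) (ν : Measure (Proj d)) = ν
    simp
  mul_smul g h ν := by
    refine Subtype.ext ?_
    change Measure.map (fun p : Proj d => (g * h) • p) (ν : Measure (Proj d)) =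
      Measure.map (fun p : Proj d => g • p) (Measure.map (fun p : Proj d => h • p) ν)
    rw [Measure.map_map (measurable_smul_proj g) (measurable_smul_proj h)]
    simp only [mul_smul, Function.comp_def]

theorem coe_smul_probabilityMeasure (g : GL (Fin d) ℝ) (ν : ProbabilityMeasure (Proj d)) :
    ((g • ν : ProbabilityMeasure (Proj d)) : Measure (Proj d)) =
      Measure.map (fun p => g • p) (ν : Measure (Proj d)) := rfl

instance : ContinuousConstSMul (GL (Fin d) ℝ) (ProbabilityMeasure (Proj d)) where
  continuous_const_smul g := ProbabilityMeasure.continuous_map (continuous_const_smul g)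

theorem mem_closure_range_iff_exists_ultrafilter {α β : Type*} [TopologicalSpace β] {F : α → β}
    {b : β} : b ∈ closure (range F) ↔ ∃ U : Ultrafilter α, Tendsto F U (𝓝 b) := by
  rw [mem_closure_iff_clusterPt, ← image_univ, ← map_principal, principal_univ]
  change MapClusterPt b ⊤ F ↔ _
  rw [mapClusterPt_iff_ultrafilter]
  simp

variable {ι : Type*}

/-- Pointwise limits of projective linear maps along filters carrying one point to another. -/
def transporter (z z' : ι → ProbabilityMeasure (Proj d)) : Set (Proj d → Proj d) :=
  {e | (e, z') ∈ closure (range fun g : GL (Fin d) ℝ => (fun p : Proj d => g • p, g • z))}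

theorem isClosed_transporter (z z' : ι → ProbabilityMeasure (Proj d)) :
    IsClosed (transporter z z') :=
  isClosed_closure.preimage (Continuous.prodMk_left z')

theorem transporter_nonempty {z z' : ι → ProbabilityMeasure (Proj d)}
    (h : z' ∈ closure (range fun g : GL (Fin d) ℝ => g • z)) : (transporter z z').Nonempty := by
  obtain ⟨U, hU⟩ := mem_closure_range_iff_exists_ultrafilter.1 h
  obtain ⟨e, -, he⟩ := isCompact_univ.ultrafilter_le_nhds
    (U.map fun (g : GL (Fin d) ℝ) (p : Proj d) => g • p) (by simp)
  exact ⟨e, mem_closure_range_iff_exists_ultrafilter.2 ⟨U, Tendsto.prodMk_nhds he hU⟩⟩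

theorem comp_mem_transporter {z z' z'' : ι → ProbabilityMeasure (Proj d)} {e e' : Proj d → Proj d}
    (he' : e' ∈ transporter z' z'') (he : e ∈ transporter z z') :
    e' ∘ e ∈ transporter z z'' := by
  have h1 : MapsTo (fun q : (Proj d → Proj d) × (ι → ProbabilityMeasure (Proj d)) => (q.1 ∘ e, q.2))
      (range fun g : GL (Fin d) ℝ => (fun p : Proj d => g • p, g • z'))
      (closure (range fun g : GL (Fin d) ℝ => (fun p : Proj d => g • p, g • z))) := by
    rintro _ ⟨h, rfl⟩
    have hc : Continuous fun q : (Proj d → Proj d) × (ι → ProbabilityMeasure (Proj d)) =>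
        (h • q.1, h • q.2) := by fun_prop
    have hr : MapsTo (fun q : (Proj d → Proj d) × (ι → ProbabilityMeasure (Proj d)) =>
        (h • q.1, h • q.2)) (range fun g : GL (Fin d) ℝ => (fun p : Proj d => g • p, g • z))
        (range fun g : GL (Fin d) ℝ => (fun p : Proj d => g • p, g • z)) := by
      rintro _ ⟨g, rfl⟩
      exact ⟨h * g, Prod.ext (funext fun p => mul_smul h g p) (mul_smul h g z)⟩
    exact (map_mem_closure hc he hr :)
  have hc : Continuous
      fun q : (Proj d → Proj d) × (ι → ProbabilityMeasure (Proj d)) => (q.1 ∘ e, q.2) :=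
    (continuous_pi fun p => (continuous_apply (e p)).comp continuous_fst).prodMk continuous_snd
  exact isClosed_closure.closure_subset_iff.2 (image_subset_iff.2 h1)
    (image_closure_subset_closure_image hc ⟨_, he', rfl⟩)

theorem exists_ultrafilter_of_mem_transporter {z z' : ι → ProbabilityMeasure (Proj d)}
    {e : Proj d → Proj d} (he : e ∈ transporter z z') :
    ∃ U : Ultrafilter (GL (Fin d) ℝ), (∀ p, Tendsto (fun g : GL (Fin d) ℝ => g • p) U (𝓝 (e p))) ∧
      ∀ k, Tendsto (fun g : GL (Fin d) ℝ => g • z k) U (𝓝 (z' k)) := by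
  obtain ⟨U, hU⟩ := mem_closure_range_iff_exists_ultrafilter.1 he
  refine ⟨U, tendsto_pi_nhds.1 ?_, tendsto_pi_nhds.1 ?_⟩
  · exact (continuous_fst.tendsto _).comp hU
  · exact (continuous_snd.tendsto _).comp hU

theorem isQuasiLinear_of_mem_transporter {z z' : ι → ProbabilityMeasure (Proj d)}
    {e : Proj d → Proj d} (he : e ∈ transporter z z') : IsQuasiLinear e := by
  obtain ⟨U, hU, -⟩ := exists_ultrafilter_of_mem_transporter he
  exact isQuasiLinear_of_tendsto hU

theorem measurable_of_mem_transporter {z z' : ι → ProbabilityMeasure (Proj d)}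
    {e : Proj d → Proj d} (he : e ∈ transporter z z') : Measurable e := by
  obtain ⟨U, hU, -⟩ := exists_ultrafilter_of_mem_transporter he
  exact measurable_of_tendsto hU

theorem map_of_mem_transporter {z z' : ι → ProbabilityMeasure (Proj d)}
    {e : Proj d → Proj d} (he : e ∈ transporter z z') (k : ι) :
    Measure.map e (z k : Measure (Proj d)) = z' k := by
  have hm := measurable_of_mem_transporter he
  obtain ⟨U, hU, hz⟩ := exists_ultrafilter_of_mem_transporter he
  have := Measure.isProbabilityMeasure_map (μ := (z k : Measure (Proj d))) hm.aemeasurable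
  refine ext_of_forall_integral_eq_of_IsFiniteMeasure fun f => ?_
  rw [integral_map hm.aemeasurable f.continuous.measurable.aestronglyMeasurable]
  refine tendsto_nhds_unique (tendsto_integral_smul hU f.toContinuousMap (z k)) ?_
  refine (ProbabilityMeasure.tendsto_iff_forall_integral_tendsto.1 (hz k) f).congr fun g => ?_
  rw [coe_smul_probabilityMeasure, integral_map (measurable_smul_proj g).aemeasurable
    f.continuous.measurable.aestronglyMeasurable]
  rfl

theorem exists_smul_eq_of_mem_closure {z z' : ι → ProbabilityMeasure (Proj d)}
    (h : z' ∈ closure (range fun g : GL (Fin d) ℝ => g • z))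
    (h' : z ∈ closure (range fun g : GL (Fin d) ℝ => g • z')) :
    ∃ g : GL (Fin d) ℝ, g • z = z' := by
  obtain ⟨φ, hφ⟩ := transporter_nonempty h
  let _ : Semigroup (Proj d → Proj d) :=
    { mul := fun a b => a ∘ b
      mul_assoc := fun _ _ _ => rfl }
  have hcont : ∀ r : Proj d → Proj d, Continuous fun a : Proj d → Proj d => a ∘ r := fun r =>
    continuous_pi fun p => continuous_apply (r p)
  obtain ⟨u, ⟨ψ, hψ, rfl⟩, huu⟩ := exists_idempotent_in_compact_subsemigroup
    (M := Proj d → Proj d) hcont ((fun a => a ∘ φ) '' transporter z' z)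
    ((transporter_nonempty h').image _)
    ((isClosed_transporter z' z).isCompact.image (hcont φ)) (by
      rintro _ ⟨a, ha, rfl⟩ _ ⟨b, hb, rfl⟩
      exact ⟨a ∘ φ ∘ b, comp_mem_transporter ha (comp_mem_transporter hφ hb), rfl⟩)
  have huu : ∀ p, ψ (φ (ψ (φ p))) = ψ (φ p) := fun p => congrFun huu p
  have hu : ψ ∘ φ ∈ transporter z z := comp_mem_transporter hψ hφ
  have hφ₁ : φ ∘ ψ ∘ φ ∈ transporter z z' := comp_mem_transporter hφ hu
  have hψ₁ : (ψ ∘ φ) ∘ ψ ∈ transporter z' z := comp_mem_transporter hu hψ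
  obtain ⟨g, hg⟩ := exists_smul_eq_of_quasiLinear (isQuasiLinear_of_mem_transporter hφ₁)
    (isQuasiLinear_of_mem_transporter hψ₁)
    (isQuasiLinear_of_mem_transporter (comp_mem_transporter hψ₁ hφ₁))
    (isQuasiLinear_of_mem_transporter (comp_mem_transporter hφ₁ hψ₁))
    (fun p => by simp [huu])
  refine ⟨g, funext fun k => Subtype.ext ?_⟩
  change Measure.map (fun p => g • p) (z k : Measure (Proj d)) = z' k
  rw [← map_of_mem_transporter hφ₁ k]
  refine Measure.map_congr ?_
  have hum := measurable_of_mem_transporter hu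
  have hfix : ∀ᵐ p ∂(Measure.map (ψ ∘ φ) (z k : Measure (Proj d))), (ψ ∘ φ) p = p := by
    exact (ae_map_iff hum.aemeasurable (measurableSet_eq_fun hum measurable_id)).2
      (ae_of_all _ huu)
  rw [map_of_mem_transporter hu k] at hfix
  filter_upwards [hfix] with p hp
  refine hg p ?_
  simp only [Function.comp_apply, huu] at hp ⊢
  exact hp

end

section

/-- A continuous map on a compact metrizable space has a Borel right inverse on its range. -/
theorem exists_measurable_rightInverse_of_compact {K E : Type*} [TopologicalSpace K]
    [CompactSpace K] [TopologicalSpace.MetrizableSpace K] [Nonempty K] [MeasurableSpace K]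
    [BorelSpace K] [TopologicalSpace E] [T2Space E] [MeasurableSpace E] [BorelSpace E] {Θ : K → E}
    (hΘ : Continuous Θ) : ∃ s : E → K, Measurable s ∧ ∀ y ∈ range Θ, Θ (s y) = y := by
  let _ : MetricSpace K := TopologicalSpace.metrizableSpaceMetric K
  obtain ⟨c, hc, hcs⟩ := exists_nat_bool_continuous_surjective_of_compact K
  set r : (ℕ → Bool) → ℝ := fun b => (cantorSetHomeomorphNatToBool.symm b : ℝ) with hr
  have hrc : Continuous r := continuous_subtype_val.comp (Homeomorph.continuous _)
  have hri : Function.Injective r :=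
    Subtype.val_injective.comp cantorSetHomeomorphNatToBool.symm.injective
  have hre : MeasurableEmbedding r := (hrc.isClosedEmbedding hri).measurableEmbedding
  obtain ⟨c', hc', hcc'⟩ := hre.exists_measurable_extend hc.measurable fun _ => inferInstance
  set h : (ℕ → Bool) → E := Θ ∘ c with hh
  have hhc : Continuous h := hΘ.comp hc
  set m : E → ℝ := fun y => sInf (r '' (h ⁻¹' {y})) with hm
  have hcpt : ∀ y, IsCompact (r '' (h ⁻¹' {y})) := fun y =>
    ((isClosed_singleton.preimage hhc).isCompact).image hrc
  have hrange : range h = range Θ := by rw [hh, range_comp, hcs.range_eq, image_univ]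
  have hmem : ∀ y ∈ range Θ, ∃ b, h b = y ∧ r b = m y := by
    intro y hy
    rw [← hrange] at hy
    obtain ⟨b₀, hb₀⟩ := hy
    obtain ⟨b, hb, hbm⟩ := (hcpt y).sInf_mem ⟨_, b₀, hb₀, rfl⟩
    exact ⟨b, hb, hbm⟩
  have hmm : Measurable m := by
    refine measurable_of_Iic fun a => ?_
    have hset : m ⁻¹' Iic a =
        h '' (r ⁻¹' Iic a) ∪ ((range Θ)ᶜ ∩ {_y | (0 : ℝ) ≤ a}) := by
      ext y
      by_cases hy : y ∈ range Θ
      · obtain ⟨b, hb, hbm⟩ := hmem y hy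
        constructor
        · intro hya
          refine Or.inl ⟨b, ?_, hb⟩
          rw [mem_preimage, hbm]
          exact hya
        · rintro (⟨b', hb', hb'y⟩ | ⟨hn, -⟩)
          · exact (csInf_le (hcpt y).bddBelow ⟨b', hb'y, rfl⟩).trans hb'
          · exact absurd hy hn
      · have hemp : h ⁻¹' {y} = ∅ := by
          refine eq_empty_of_forall_notMem fun b hb => hy ?_
          rw [← hrange]
          exact ⟨b, hb⟩
        have hn : y ∉ h '' (r ⁻¹' Iic a) := by
          rintro ⟨b, -, hb⟩
          rw [← hrange] at hy
          exact hy ⟨b, hb⟩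
        have : m y = 0 := by simp [hm, hemp]
        simp [this, hy, hn]
    rw [hset]
    refine ((isClosed_Iic.preimage hrc).isCompact.image hhc).measurableSet.union
      (MeasurableSet.inter ?_ (MeasurableSet.const _))
    rw [← hrange]
    exact (isCompact_range hhc).measurableSet.compl
  refine ⟨c' ∘ m, hc'.comp hmm, fun y hy => ?_⟩
  obtain ⟨b, hb, hbm⟩ := hmem y hy
  rw [Function.comp_apply, ← hbm, ← Function.comp_apply (f := c'), hcc']
  exact hb

/-- A continuous map on a σ-compact metrizable space has a Borel right inverse on its range. -/
theorem exists_measurable_rightInverse {G E : Type*} [TopologicalSpace G]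
    [SigmaCompactSpace G] [TopologicalSpace.MetrizableSpace G] [Nonempty G] [MeasurableSpace G]
    [BorelSpace G] [TopologicalSpace E] [T2Space E] [MeasurableSpace E] [BorelSpace E] {Θ : G → E}
    (hΘ : Continuous Θ) : ∃ s : E → G, Measurable s ∧ ∀ y ∈ range Θ, Θ (s y) = y := by
  classical
  have hex : ∀ n, ∃ s : E → G, Measurable s ∧ ∀ y ∈ Θ '' compactCovering G n, Θ (s y) = y := by
    intro n
    rcases (compactCovering G n).eq_empty_or_nonempty with h | h
    · exact ⟨fun _ => Classical.arbitrary G, measurable_const, by simp [h]⟩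
    · have : Nonempty (compactCovering G n) := h.to_subtype
      have : CompactSpace (compactCovering G n) :=
        isCompact_iff_compactSpace.1 (isCompact_compactCovering G n)
      obtain ⟨s, hs, hsy⟩ := exists_measurable_rightInverse_of_compact
        (hΘ.comp (continuous_subtype_val (p := (· ∈ compactCovering G n))))
      refine ⟨fun y => s y, measurable_subtype_coe.comp hs, ?_⟩
      rintro _ ⟨g, hg, rfl⟩
      exact hsy _ ⟨⟨g, hg⟩, rfl⟩
  choose s hs hsy using hex
  have hK : ∀ n, MeasurableSet (Θ '' compactCovering G n) := fun n =>
    ((isCompact_compactCovering G n).image hΘ).measurableSet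
  have hU : range Θ = ⋃ n, Θ '' compactCovering G n := by
    rw [← image_iUnion, iUnion_compactCovering, image_univ]
  have hcover : ∀ y, ∃ n, y ∈ Θ '' compactCovering G n ∨ y ∉ range Θ := by
    intro y
    by_cases hy : y ∈ range Θ
    · rw [hU, mem_iUnion] at hy
      exact hy.imp fun n hn => Or.inl hn
    · exact ⟨0, Or.inr hy⟩
  refine ⟨fun y => s (Nat.find (hcover y)) y, Measurable.find hs (fun n => ?_) hcover,
    fun y hy => ?_⟩
  · refine (hK n).union (MeasurableSet.compl ?_)
    rw [hU]
    exact MeasurableSet.iUnion hK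
  · exact hsy _ y ((Nat.find_spec (hcover y)).resolve_right fun h => h hy)

variable {d : ℕ} {ι : Type*}

instance : SecondCountableTopology (ProbabilityMeasure (Proj d)) := by
  let _ : MetricSpace (ProbabilityMeasure (Proj d)) := TopologicalSpace.metrizableSpaceMetric _
  infer_instance

theorem lipschitzWith_integral (ν : Measure (Proj d)) [IsProbabilityMeasure ν] :
    LipschitzWith 1 fun f : C(Proj d, ℝ) => ∫ p, f p ∂ν := by
  have hint : ∀ f : C(Proj d, ℝ), Integrable (fun p => f p) ν := fun f =>
    Integrable.of_bound f.continuous.measurable.aestronglyMeasurable ‖f‖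
      (ae_of_all _ f.norm_coe_le_norm)
  refine LipschitzWith.of_dist_le_mul fun f g => ?_
  rw [dist_eq_norm, dist_eq_norm, ← integral_sub (hint f) (hint g)]
  simpa using norm_integral_le_of_norm_le_const (μ := ν)
    (ae_of_all _ fun p => (f - g).norm_coe_le_norm p)

theorem measure_ext_of_integral_denseSeq {ν ν' : Measure (Proj d)} [IsProbabilityMeasure ν]
    [IsProbabilityMeasure ν']
    (h : ∀ j, ∫ p, TopologicalSpace.denseSeq C(Proj d, ℝ) j p ∂ν =
      ∫ p, TopologicalSpace.denseSeq C(Proj d, ℝ) j p ∂ν') : ν = ν' := by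
  have h2 := (TopologicalSpace.denseRange_denseSeq C(Proj d, ℝ)).equalizer
    (lipschitzWith_integral ν).continuous (lipschitzWith_integral ν').continuous (funext h)
  exact ext_of_forall_integral_eq_of_IsFiniteMeasure fun f => congrFun h2 f.toContinuousMap

theorem measurable_borel_probabilityMeasure {X : Type*} [MeasurableSpace X]
    {κ : X → ProbabilityMeasure (Proj d)}
    (hκ : ∀ f : C(Proj d, ℝ), Measurable fun x => ∫ p, f p ∂(κ x : Measure (Proj d))) :
    @Measurable _ _ _ (borel _) κ := by
  let _ : MeasurableSpace (ProbabilityMeasure (Proj d)) := borel _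
  have : BorelSpace (ProbabilityMeasure (Proj d)) := ⟨rfl⟩
  set Φ : ProbabilityMeasure (Proj d) → ℕ → ℝ := fun ν j =>
    ∫ p, TopologicalSpace.denseSeq C(Proj d, ℝ) j p ∂(ν : Measure (Proj d)) with hΦ
  have hc : Continuous Φ := continuous_pi fun j =>
    continuous_iff_continuousAt.2 fun ν =>
      ProbabilityMeasure.tendsto_iff_forall_integral_tendsto.1 tendsto_id
        (BoundedContinuousFunction.mkOfCompact (TopologicalSpace.denseSeq C(Proj d, ℝ) j))
  have hi : Function.Injective Φ := fun ν ν' h => by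
    have h' : (ν : Measure (Proj d)) = ν' :=
      measure_ext_of_integral_denseSeq fun j => congrFun h j
    exact Subtype.ext h'
  refine (hc.isClosedEmbedding hi).measurableEmbedding.measurable_comp_iff.1 ?_
  exact measurable_pi_iff.2 fun j => hκ _

theorem measurable_borel_pi_probabilityMeasure [Countable ι] {X : Type*} [MeasurableSpace X]
    {z : X → ι → ProbabilityMeasure (Proj d)}
    (hz : ∀ k, ∀ f : C(Proj d, ℝ), Measurable fun x => ∫ p, f p ∂(z x k : Measure (Proj d))) :
    @Measurable _ _ _ (borel _) z := by
  let _ : MeasurableSpace (ProbabilityMeasure (Proj d)) := borel _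
  have : BorelSpace (ProbabilityMeasure (Proj d)) := ⟨rfl⟩
  have h : Measurable z := measurable_pi_iff.2 fun k => measurable_borel_probabilityMeasure (hz k)
  rwa [(Pi.borelSpace (X := fun _ : ι => ProbabilityMeasure (Proj d))).measurable_eq] at h

theorem continuous_smul_probabilityMeasure (ν : ProbabilityMeasure (Proj d)) :
    Continuous fun g : GL (Fin d) ℝ => g • ν := by
  rw [continuous_iff_continuousAt]
  intro g₀
  refine ProbabilityMeasure.tendsto_iff_forall_integral_tendsto.2 fun f => ?_
  have : ∀ g : GL (Fin d) ℝ, ∫ p, f p ∂((g • ν : ProbabilityMeasure (Proj d)) : Measure (Proj d)) =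
      ∫ p, f (g • p) ∂(ν : Measure (Proj d)) := fun g => by
    rw [coe_smul_probabilityMeasure, integral_map (measurable_smul_proj g).aemeasurable
      f.continuous.measurable.aestronglyMeasurable]
  simp only [this]
  refine (continuous_of_dominated (bound := fun _ => ‖f‖) (fun g => ?_) (fun g => ?_)
    (integrable_const _) ?_).tendsto g₀
  · exact (f.continuous.measurable.comp (measurable_smul_proj g)).aestronglyMeasurable
  · exact ae_of_all _ fun p => f.norm_coe_le_norm _
  · exact ae_of_all _ fun p => f.continuous.comp (continuous_id.smul continuous_const)

theorem exists_measurable_smul_eq [Countable ι] {X : Type*} [MeasurableSpace X]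
    {z : X → ι → ProbabilityMeasure (Proj d)} (hz : @Measurable _ _ _ (borel _) z)
    (z₀ : ι → ProbabilityMeasure (Proj d)) :
    ∃ s : X → GL (Fin d) ℝ, Measurable (fun x => (s x).1) ∧
      ∀ x, (∃ g : GL (Fin d) ℝ, g • z₀ = z x) → s x • z₀ = z x := by
  let _ : MeasurableSpace (ι → ProbabilityMeasure (Proj d)) := borel _
  have : BorelSpace (ι → ProbabilityMeasure (Proj d)) := ⟨rfl⟩
  let _ : MeasurableSpace (GL (Fin d) ℝ) := borel _
  have : BorelSpace (GL (Fin d) ℝ) := ⟨rfl⟩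
  have hΘ : Continuous fun g : GL (Fin d) ℝ => g • z₀ :=
    continuous_pi fun k => continuous_smul_probabilityMeasure (z₀ k)
  obtain ⟨s, hs, hsy⟩ := exists_measurable_rightInverse hΘ
  exact ⟨s ∘ z, Units.continuous_val.measurable.comp (hs.comp hz), fun x hx => hsy _ hx⟩

/-- The matrix with determinant `±1` obtained by rescaling an invertible matrix. -/
theorem exists_det_normalized {X : Type*} [MeasurableSpace X] {s : X → GL (Fin d) ℝ}
    (hs : Measurable fun x => (s x).1) :
    ∃ P : X → GL (Fin d) ℝ, Measurable (fun x => (P x).1) ∧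
      (∀ x, (P x).1.det = 1 ∨ (P x).1.det = -1) ∧ ∀ x, ∀ p : Proj d, P x • p = s x • p := by
  set c : X → ℝ := fun x => |(s x).1.det| ^ (-(1 / d : ℝ)) with hc
  have hdet : ∀ x, (s x).1.det ≠ 0 := fun x => (Matrix.isUnits_det_units (s x)).ne_zero
  have hc0 : ∀ x, 0 < c x := fun x => Real.rpow_pos_of_pos (abs_pos.2 (hdet x)) _
  have hdm : Measurable fun x => (s x).1.det :=
    (continuous_id.matrix_det (n := Fin d) (R := ℝ)).measurable.comp hs
  refine ⟨fun x => Units.mk0 (c x) (hc0 x).ne' • s x, ?_, fun x => ?_, fun x p => ?_⟩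
  · change Measurable fun x => c x • (s x).1
    exact (continuous_fst.smul continuous_snd).measurable.comp
      ((hdm.abs.pow_const (-(1 / d : ℝ))).prodMk hs)
  · change (c x • (s x).1).det = 1 ∨ (c x • (s x).1).det = -1
    rw [← abs_eq zero_le_one, Matrix.det_smul, abs_mul, abs_pow, abs_of_pos (hc0 x)]
    simp only [hc, Fintype.card_fin]
    rcases Nat.eq_zero_or_pos d with rfl | hd
    · simp
    rw [← Real.rpow_natCast, ← Real.rpow_mul (abs_nonneg _)]
    have : -(1 / d : ℝ) * d = -1 := by field_simp
    rw [this, Real.rpow_neg_one, inv_mul_cancel₀ (abs_pos.2 (hdet x)).ne']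
  · induction p using Projectivization.ind with | _ v hv
    rw [smul_mk, smul_mk, Projectivization.mk_eq_mk_iff']
    exact ⟨c x, (Matrix.smul_mulVec _ _ _).symm⟩

end

section

variable {d : ℕ} {X Y : Type*} [MeasurableSpace X] [MeasurableSpace Y]

theorem map_eval_zero_of_isBernoulli {p : Measure Y} {Pr : Measure (ℤ → Y)}
    (hPr : IsBernoulli p Pr) : Pr.map (fun ω => ω 0) = p := by
  ext t ht
  rw [Measure.map_apply (measurable_pi_apply 0) ht]
  have h := hPr {0} (fun _ => t) fun _ _ => ht
  simp only [Finset.mem_singleton, forall_eq, Finset.prod_singleton] at h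
  exact h

theorem measure_eq_zero_or_compl_of_invariant {μ : Measure X} [IsProbabilityMeasure μ]
    {p : Measure Y} {Pr : Measure (ℤ → Y)} [IsProbabilityMeasure Pr] (hPr : IsBernoulli p Pr)
    {f : Y → X → X} (hf : Measurable fun q : Y × X => f q.1 q.2)
    (herg : Ergodic (fbar f) (Pr.prod μ)) {S : Set X} (hS : MeasurableSet S)
    (h : ∀ᵐ i ∂p, ∀ᵐ x ∂μ, f i x ∈ S ↔ x ∈ S) : (∀ᵐ x ∂μ, x ∉ S) ∨ ∀ᵐ x ∂μ, x ∈ S := by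
  have hm : Measurable fun q : (ℤ → Y) × X => f (q.1 0) q.2 :=
    hf.comp (g := fun q : Y × X => f q.1 q.2) (f := fun q : (ℤ → Y) × X => (q.1 0, q.2))
      (((measurable_pi_apply 0).comp measurable_fst).prodMk measurable_snd)
  have hinv : ∀ᵐ q ∂(Pr.prod μ), f (q.1 0) q.2 ∈ S ↔ q.2 ∈ S := by
    refine (Measure.ae_prod_iff_ae_ae ?_).2 ?_
    · exact (hm hS).iff (measurable_snd hS)
    · rw [← map_eval_zero_of_isBernoulli hPr] at h
      exact ae_of_ae_map (measurable_pi_apply 0).aemeasurable h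
  have hinv' : fbar f ⁻¹' (univ ×ˢ S) =ᵐ[Pr.prod μ] univ ×ˢ S := by
    refine eventuallyEq_set.2 ?_
    filter_upwards [hinv] with q hq
    simpa [fbar] using hq
  have hae : ∀ {T : Set X}, univ ×ˢ T =ᵐ[Pr.prod μ] univ → ∀ᵐ x ∂μ, x ∈ T := fun {T} hT => by
    have := ae_eq_univ.1 hT
    rw [show (univ ×ˢ T : Set ((ℤ → Y) × X))ᶜ = univ ×ˢ Tᶜ by ext; simp, Measure.prod_prod] at this
    exact (by simpa using this : μ Tᶜ = 0)
  rcases herg.quasiErgodic.ae_empty_or_univ₀ (MeasurableSet.univ.prod hS).nullMeasurableSet hinv'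
    with h0 | h1
  · left
    have := ae_eq_empty.1 h0
    rw [Measure.prod_prod] at this
    exact measure_eq_zero_iff_ae_notMem.1 (by simpa using this)
  · exact Or.inr (hae h1)

theorem exists_ae_smul_eq {ι : Type*} [Countable ι] {μ : Measure X} [IsProbabilityMeasure μ]
    {p : Measure Y} {Pr : Measure (ℤ → Y)} [IsProbabilityMeasure Pr] (hPr : IsBernoulli p Pr)
    {f : Y → X → X} (hf : Measurable fun q : Y × X => f q.1 q.2)
    (herg : Ergodic (fbar f) (Pr.prod μ)) {z : X → ι → ProbabilityMeasure (Proj d)}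
    (hz : @Measurable _ _ _ (borel _) z)
    (hinv : ∀ᵐ i ∂p, ∀ᵐ x ∂μ, ∃ g : GL (Fin d) ℝ, g • z x = z (f i x)) :
    ∃ z₀ : ι → ProbabilityMeasure (Proj d), ∀ᵐ x ∂μ, ∃ g : GL (Fin d) ℝ, g • z₀ = z x := by
  let _ : MeasurableSpace (ι → ProbabilityMeasure (Proj d)) := borel _
  have : BorelSpace (ι → ProbabilityMeasure (Proj d)) := ⟨rfl⟩
  set B := TopologicalSpace.countableBasis (ι → ProbabilityMeasure (Proj d)) with hB
  have hBb : TopologicalSpace.IsTopologicalBasis B := TopologicalSpace.isBasis_countableBasis _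
  set sat : Set (ι → ProbabilityMeasure (Proj d)) → Set (ι → ProbabilityMeasure (Proj d)) :=
    fun U => {w | ∃ g : GL (Fin d) ℝ, g • w ∈ U} with hsat
  have hsatm : ∀ U ∈ B, MeasurableSet (z ⁻¹' sat U) := fun U hU => by
    refine hz (IsOpen.measurableSet ?_)
    have : sat U = ⋃ g : GL (Fin d) ℝ, (fun w => g • w) ⁻¹' U := by ext; simp [hsat]
    rw [this]
    exact isOpen_iUnion fun g => (hBb.isOpen hU).preimage (continuous_const_smul g)
  have hdich : ∀ U ∈ B, ∃ c : Prop, ∀ᵐ x ∂μ, z x ∈ sat U ↔ c := by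
    intro U hU
    have hi : ∀ᵐ i ∂p, ∀ᵐ x ∂μ, f i x ∈ z ⁻¹' sat U ↔ x ∈ z ⁻¹' sat U := by
      filter_upwards [hinv] with i hi
      filter_upwards [hi] with x ⟨g, hg⟩
      simp only [mem_preimage, ← hg]
      constructor
      · rintro ⟨h, hh⟩
        exact ⟨h * g, by rwa [mul_smul]⟩
      · rintro ⟨h, hh⟩
        exact ⟨h * g⁻¹, by rwa [mul_smul, inv_smul_smul]⟩
    rcases measure_eq_zero_or_compl_of_invariant hPr hf herg (hsatm U hU) hi with h | h
    · exact ⟨False, by filter_upwards [h] with x hx; simpa using hx⟩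
    · exact ⟨True, by filter_upwards [h] with x hx; simpa using hx⟩
  choose! c hc using hdich
  have hall : ∀ᵐ x ∂μ, ∀ U ∈ B, z x ∈ sat U ↔ c U :=
    (ae_ball_iff (TopologicalSpace.countable_countableBasis _)).2 hc
  obtain ⟨x₀, hx₀⟩ := hall.exists
  have key : ∀ x y, (∀ U ∈ B, z x ∈ sat U ↔ c U) → (∀ U ∈ B, z y ∈ sat U ↔ c U) →
      z y ∈ closure (range fun g : GL (Fin d) ℝ => g • z x) := by
    intro x y hx hy
    refine hBb.mem_closure_iff.2 fun U hU hyU => ?_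
    obtain ⟨g, hg⟩ := (hx U hU).2 ((hy U hU).1 ⟨1, by rwa [one_smul]⟩)
    exact ⟨_, hg, g, rfl⟩
  refine ⟨z x₀, ?_⟩
  filter_upwards [hall] with x hx
  exact exists_smul_eq_of_mem_closure (key _ _ hx₀ hx) (key _ _ hx hx₀)

end

section

variable {d : ℕ}

theorem isEmbedding_val_gl : IsEmbedding (Units.val : GL (Fin d) ℝ → Matrix (Fin d) (Fin d) ℝ) := by
  refine Units.isEmbedding_val_mk' (f := fun M => M⁻¹) ?_ fun u => (Matrix.coe_units_inv u).symm
  intro M hM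
  have hdet : M.det ≠ 0 := ((Matrix.isUnit_iff_isUnit_det M).1 hM).ne_zero
  have h : (fun M : Matrix (Fin d) (Fin d) ℝ => M⁻¹) = fun M => M.det⁻¹ • M.adjugate := by
    funext M
    rw [Matrix.inv_def, Ring.inverse_eq_inv']
  rw [h]
  refine ContinuousAt.continuousWithinAt (ContinuousAt.smul (ContinuousAt.inv₀ ?_ hdet) ?_)
  · exact (Continuous.matrix_det continuous_id).continuousAt
  · exact (Continuous.matrix_adjugate continuous_id).continuousAt

instance : BorelSpace (GL (Fin d) ℝ) := by
  refine ⟨?_⟩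
  rw [isEmbedding_val_gl.eq_induced, borel_comap, ← BorelSpace.measurable_eq]
  rfl

theorem measurable_gl_iff {X : Type*} [MeasurableSpace X] {g : X → GL (Fin d) ℝ} :
    Measurable g ↔ Measurable fun x => (g x : Matrix (Fin d) (Fin d) ℝ) :=
  measurable_comap_iff

theorem measurable_smul_gl :
    Measurable fun q : GL (Fin d) ℝ × Proj d => q.1 • q.2 :=
  continuous_smul.measurable

/-- The graph map `(x, p) ↦ (h x, g x • p)` of a measurable linear cocycle. -/
noncomputable def skew {X : Type*} (h : X → X) (g : X → GL (Fin d) ℝ) (q : X × Proj d) :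
    X × Proj d := (h q.1, g q.1 • q.2)

theorem measurable_skew {X : Type*} [MeasurableSpace X] {h : X → X} {g : X → GL (Fin d) ℝ}
    (hh : Measurable h) (hg : Measurable g) : Measurable (skew h g) :=
  (hh.comp measurable_fst).prodMk
    (measurable_smul_gl.comp ((hg.comp measurable_fst).prodMk measurable_snd))

theorem continuous_comp_inv_smul (φ : C(Proj d, ℝ)) :
    ∃ Φ : C(GL (Fin d) ℝ, C(Proj d, ℝ)), ∀ g p, Φ g p = φ (g⁻¹ • p) :=
  ⟨ContinuousMap.curry ⟨fun q => φ (q.1⁻¹ • q.2),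
    φ.continuous.comp (continuous_fst.inv.smul continuous_snd)⟩, fun _ _ => rfl⟩

/-- On a separable space, the common zeros of a family of `1`-Lipschitz functions are already
determined by a countable subfamily. -/
theorem exists_countable_dominating {α L : Type*} [PseudoMetricSpace L]
    [TopologicalSpace.SeparableSpace L] (J : α → L → ℝ) (hJ : ∀ a, LipschitzWith 1 (J a)) :
    ∃ D : Set α, D.Countable ∧ ∀ a ψ, (∀ b ∈ D, J b ψ = 0) → J a ψ = 0 := by
  rcases isEmpty_or_nonempty L with hL | hL
  · exact ⟨∅, countable_empty, fun a ψ => (IsEmpty.false ψ).elim⟩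
  rcases isEmpty_or_nonempty α with hα | hα
  · exact ⟨∅, countable_empty, fun a => (IsEmpty.false a).elim⟩
  let e : α → ℕ → ℝ := fun a n => J a (TopologicalSpace.denseSeq L n)
  obtain ⟨t, ht, htc, hd⟩ := (TopologicalSpace.IsSeparable.of_separableSpace
    (range e)).exists_countable_dense_subset
  choose! c hc using fun y (hy : y ∈ t) => ht hy
  refine ⟨c '' t, htc.image c, fun a ψ h => ?_⟩
  by_contra hne
  have hpos : 0 < |J a ψ| := abs_pos.2 hne
  set ε := |J a ψ| / 4 with hε
  obtain ⟨n, hn⟩ := (TopologicalSpace.denseRange_denseSeq L).exists_dist_lt ψ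
    (show 0 < ε by positivity)
  have hU : {y : ℕ → ℝ | |y n - e a n| < ε} ∈ 𝓝 (e a) := by
    refine IsOpen.mem_nhds ?_ (by simp [hε, hpos])
    exact isOpen_lt (by fun_prop) continuous_const
  obtain ⟨y, hyU, hyt⟩ := mem_closure_iff_nhds.1 (hd (mem_range_self a)) _ hU
  have h1 := h (c y) (mem_image_of_mem c hyt)
  have h2 : J (c y) (TopologicalSpace.denseSeq L n) = y n := congrFun (hc y hyt) n
  have h3 := (hJ a).dist_le_mul ψ (TopologicalSpace.denseSeq L n)
  have h4 := (hJ (c y)).dist_le_mul ψ (TopologicalSpace.denseSeq L n)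
  simp only [NNReal.coe_one, one_mul, Real.dist_eq] at h3 h4
  rw [h1, h2] at h4
  have h5 : |y n - J a (TopologicalSpace.denseSeq L n)| < ε := hyU
  have h6 : |J a ψ| < |J a ψ| := by
    calc |J a ψ| = |(J a ψ - J a (TopologicalSpace.denseSeq L n)) -
          (y n - J a (TopologicalSpace.denseSeq L n)) - (0 - y n)| := by ring_nf
      _ ≤ |J a ψ - J a (TopologicalSpace.denseSeq L n)| +
          |y n - J a (TopologicalSpace.denseSeq L n)| + |0 - y n| :=
          (abs_sub _ _).trans (by gcongr; exact abs_sub _ _)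
      _ < |J a ψ| := by linarith
  exact lt_irrefl _ h6

end

section

open ProbabilityTheory

variable {d : ℕ} {X : Type*} [MeasurableSpace X]

/-- Invariance of a measure on `X × ℙ(ℝ^d)` means equivariance of its disintegration. -/
theorem ae_map_eq_of_map_skew_eq [StandardBorelSpace X] {μ : Measure X} [IsProbabilityMeasure μ]
    {κ : Kernel X (Proj d)} [IsMarkovKernel κ] {h : X → X} (hh : Function.Injective h)
    (hμ : MeasurePreserving h μ μ) {g : X → GL (Fin d) ℝ} (hg : Measurable g)
    (hinv : (μ ⊗ₘ κ).map (skew h g) = μ ⊗ₘ κ) :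
    ∀ᵐ x ∂μ, (κ x).map (fun p => g x • p) = κ (h x) := by
  let κ₂ : Kernel X (Proj d) := ⟨fun x => (κ x).map fun p => g x • p, by
    refine Measure.measurable_of_measurable_coe _ fun s hs => ?_
    have h1 : MeasurableSet {q : X × Proj d | g q.1 • q.2 ∈ s} :=
      (measurable_snd.comp (measurable_skew measurable_id hg)) hs
    convert Kernel.measurable_kernel_prodMk_left (κ := κ) h1 using 2 with x
    rw [Measure.map_apply (measurable_smul_proj _) hs]
    rfl⟩
  have hκ₂ : ∀ x, κ₂ x = (κ x).map fun p => g x • p := fun x => rfl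
  have : IsMarkovKernel κ₂ := ⟨fun x => by
    rw [hκ₂]
    exact Measure.isProbabilityMeasure_map (measurable_smul_proj _).aemeasurable⟩
  let κ₁ : Kernel X (Proj d) := κ.comap h hμ.measurable
  let F : X × Proj d → X × Proj d := Prod.map h id
  have hF : Measurable F := hμ.measurable.prodMap measurable_id
  have hFe : MeasurableEmbedding F :=
    hF.measurableEmbedding (hh.prodMap Function.injective_id)
  have h1 : (μ ⊗ₘ κ₁).map F = μ ⊗ₘ κ := by
    ext s hs
    rw [Measure.map_apply hF hs, Measure.compProd_apply (hF hs), Measure.compProd_apply hs,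
      ← hμ.lintegral_comp (Kernel.measurable_kernel_prodMk_left hs)]
    rfl
  have h2 : (μ ⊗ₘ κ₂).map F = μ ⊗ₘ κ := by
    rw [← hinv]
    have hsk := measurable_skew hμ.measurable hg
    ext s hs
    rw [Measure.map_apply hF hs, Measure.compProd_apply (hF hs), Measure.map_apply hsk hs,
      Measure.compProd_apply (hsk hs)]
    refine lintegral_congr fun x => ?_
    rw [hκ₂, Measure.map_apply (measurable_smul_proj _) (measurable_prodMk_left (hF hs))]
    rfl
  have h3 : μ ⊗ₘ κ₁ = μ ⊗ₘ κ₂ := by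
    rw [← hFe.comap_map (μ ⊗ₘ κ₁), h1, ← h2, hFe.comap_map]
  filter_upwards [Kernel.ae_eq_of_compProd_eq h3] with x hx
  rw [← hκ₂, ← hx]
  rfl

theorem stronglyMeasurable_eval {ψ : X → C(Proj d, ℝ)} (hψ : StronglyMeasurable ψ) :
    StronglyMeasurable fun q : X × Proj d => ψ q.1 q.2 := by
  have h : Continuous fun r : C(Proj d, ℝ) × Proj d => r.1 r.2 := continuous_eval
  exact h.comp_stronglyMeasurable
    ((hψ.comp_measurable measurable_fst).prodMk measurable_snd.stronglyMeasurable)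

theorem integrable_eval {μ : Measure X} {m : Measure (X × Proj d)} (hm : m.map Prod.fst = μ)
    {ψ : X → C(Proj d, ℝ)} (hψ : StronglyMeasurable ψ) (hi : Integrable ψ μ) :
    Integrable (fun q : X × Proj d => ψ q.1 q.2) m := by
  rw [← hm] at hi
  refine (hi.norm.comp_measurable measurable_fst).mono'
    (stronglyMeasurable_eval hψ).aestronglyMeasurable (Eventually.of_forall fun q => ?_)
  exact (ψ q.1).norm_coe_le_norm q.2

theorem abs_integral_eval_le {μ : Measure X} {m : Measure (X × Proj d)}
    (hm : m.map Prod.fst = μ) {ψ : X → C(Proj d, ℝ)} (hi : Integrable ψ μ) :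
    |∫ q, ψ q.1 q.2 ∂m| ≤ ∫ x, ‖ψ x‖ ∂μ := by
  rw [← hm] at hi ⊢
  rw [integral_map measurable_fst.aemeasurable hi.aestronglyMeasurable.norm, ← Real.norm_eq_abs]
  exact norm_integral_le_of_norm_le (hi.norm.comp_measurable measurable_fst)
    (Eventually.of_forall fun q => (ψ q.1).norm_coe_le_norm q.2)

theorem lipschitzWith_integral_eval {μ : Measure X} {m : Measure (X × Proj d)}
    (hm : m.map Prod.fst = μ) :
    LipschitzWith 1 fun ψ : Lp C(Proj d, ℝ) 1 μ => ∫ q, ψ q.1 q.2 ∂m := by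
  refine LipschitzWith.of_dist_le_mul fun ψ ψ' => ?_
  have h1 := L1.integrable_coeFn ψ
  have h2 := L1.integrable_coeFn ψ'
  rw [NNReal.coe_one, one_mul, Real.dist_eq, L1.dist_eq_integral_dist,
    ← integral_sub (integrable_eval hm (Lp.stronglyMeasurable ψ) h1)
      (integrable_eval hm (Lp.stronglyMeasurable ψ') h2)]
  simp_rw [dist_eq_norm]
  exact abs_integral_eval_le hm (h1.sub h2)

theorem integral_eval_toL1 {μ : Measure X} {m : Measure (X × Proj d)} (hm : m.map Prod.fst = μ)
    {ψ : X → C(Proj d, ℝ)} (hi : Integrable ψ μ) :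
    ∫ q, hi.toL1 ψ q.1 q.2 ∂m = ∫ q, ψ q.1 q.2 ∂m := by
  refine integral_congr_ae ?_
  have h : ∀ᵐ x ∂m.map Prod.fst, hi.toL1 ψ x = ψ x := hm.symm ▸ hi.coeFn_toL1
  filter_upwards [ae_of_ae_map measurable_fst.aemeasurable h] with q hq
  rw [hq]

/-- Among the measures on `X × ℙ(ℝ^d)` with a given marginal, countably many detect whether an
integrable family of test functions annihilates them all. -/
theorem exists_countable_determining [StandardBorelSpace X] {μ : Measure X} [IsProbabilityMeasure μ]
    (S : Set (Measure (X × Proj d))) (hS : ∀ m ∈ S, m.map Prod.fst = μ) :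
    ∃ D ⊆ S, D.Countable ∧ ∀ m ∈ S, ∀ ψ : X → C(Proj d, ℝ), Integrable ψ μ →
      (∀ b ∈ D, ∫ q, ψ q.1 q.2 ∂b = 0) → ∫ q, ψ q.1 q.2 ∂m = 0 := by
  have : Fact ((1 : ℝ≥0∞) ≠ ∞) := ⟨ENNReal.one_ne_top⟩
  obtain ⟨D, hD, h⟩ := exists_countable_dominating
    (fun (m : S) (ψ : Lp C(Proj d, ℝ) 1 μ) => ∫ q, ψ q.1 q.2 ∂m.1)
    fun m => lipschitzWith_integral_eval (hS m.1 m.2)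
  refine ⟨Subtype.val '' D, by simp, hD.image _, fun m hm ψ hψ hz => ?_⟩
  have := h ⟨m, hm⟩ (hψ.toL1 ψ) fun b hb => ?_
  · simpa only [integral_eval_toL1 (hS m hm) hψ] using this
  · simpa only [integral_eval_toL1 (hS b.1 b.2) hψ] using hz b.1 (mem_image_of_mem _ hb)

theorem eq_prod_of_integral_eq {μ : Measure X} [IsProbabilityMeasure μ]
    {m : Measure (X × Proj d)} [IsProbabilityMeasure m]
    (h : ∀ C, MeasurableSet C → ∀ φ : C(Proj d, ℝ),
      ∫ q, (C.indicator (fun _ => 1) q.1 - μ.real C) * φ q.2 ∂m = 0) :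
    m = μ.prod (m.map Prod.snd) := by
  have hφ : ∀ φ : C(Proj d, ℝ), Integrable (fun q : X × Proj d => φ q.2) m := fun φ =>
    Integrable.of_bound (φ.continuous.measurable.comp measurable_snd).aestronglyMeasurable ‖φ‖
      (Eventually.of_forall fun q => φ.norm_coe_le_norm q.2)
  have : IsProbabilityMeasure (m.map Prod.snd) :=
    Measure.isProbabilityMeasure_map measurable_snd.aemeasurable
  refine (Measure.prod_eq fun C T hC hT => ?_).symm
  have hC' : MeasurableSet (Prod.fst ⁻¹' C : Set (X × Proj d)) := measurable_fst hC
  have key : (m.restrict (Prod.fst ⁻¹' C)).map Prod.snd = μ C • m.map Prod.snd := by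
    have : IsFiniteMeasure (μ C • m.map Prod.snd) :=
      Measure.smul_finite _ (measure_ne_top _ _)
    refine ext_of_forall_integral_eq_of_IsFiniteMeasure fun φ => ?_
    rw [integral_map measurable_snd.aemeasurable φ.continuous.measurable.aestronglyMeasurable,
      integral_smul_measure,
      integral_map measurable_snd.aemeasurable φ.continuous.measurable.aestronglyMeasurable]
    have hφ' : Integrable (fun q : X × Proj d => φ q.2) m := hφ φ.toContinuousMap
    have h1 := h C hC φ.toContinuousMap
    have h2 : ∀ q : X × Proj d, (C.indicator (fun _ => (1 : ℝ)) q.1 - μ.real C) * φ q.2 =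
        (Prod.fst ⁻¹' C).indicator (fun q : X × Proj d => φ q.2) q - μ.real C * φ q.2 := by
      intro q
      by_cases hq : q.1 ∈ C <;> simp [hq, sub_mul]
    have h3 : ∫ q, ((Prod.fst ⁻¹' C).indicator (fun q : X × Proj d => φ q.2) q -
        μ.real C * φ q.2) ∂m = 0 := by
      rw [← h1]
      exact integral_congr_ae (Eventually.of_forall fun q => (h2 q).symm)
    rw [integral_sub (hφ'.indicator hC') (hφ'.const_mul _), integral_indicator hC', integral_const_mul,
      sub_eq_zero] at h3
    exact h3
  have h4 := congrArg (fun ν => ν T) key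
  simp only [Measure.smul_apply, smul_eq_mul] at h4
  rw [← h4, Measure.map_apply measurable_snd hT, Measure.restrict_apply (measurable_snd hT)]
  congr 1
  ext q
  simp [and_comm]

end

section

open ProbabilityTheory

variable {d : ℕ} {X : Type*} [MeasurableSpace X]

theorem exists_compProd_eq {μ : Measure X} {m : Measure (X × Proj d)}
    (hm : IsProbabilityMeasure m) (hmμ : m.map Prod.fst = μ) :
    ∃ κ : Kernel X (Proj d), IsMarkovKernel κ ∧ μ ⊗ₘ κ = m := by
  have : Nonempty (Proj d) := ⟨m.nonempty_of_neZero.some.2⟩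
  refine ⟨m.condKernel, inferInstance, ?_⟩
  rw [← hmμ]
  exact m.disintegrate m.condKernel

/-- Some measurable `SL±`-valued conjugacy makes every invariant measure of the conjugated cocycle
a product: it trivialises the disintegrations of a countable determining family. -/
theorem exists_conjugacy [StandardBorelSpace X] {Y : Type*} [MeasurableSpace Y] {μ : Measure X}
    [IsProbabilityMeasure μ] {p : Measure Y} {Pr : Measure (ℤ → Y)} [IsProbabilityMeasure Pr]
    (hPr : IsBernoulli p Pr) {f : Y → X → X} {A : Y → X → GL (Fin d) ℝ}
    (hf : Measurable fun q : Y × X => f q.1 q.2)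
    (hfp : ∀ᵐ i ∂p, Function.Bijective (f i) ∧ MeasurePreserving (f i) μ μ)
    (hA : ∀ i, Measurable (A i)) (herg : Ergodic (fbar f) (Pr.prod μ)) :
    ∃ P : X → GL (Fin d) ℝ, Measurable P ∧
      (∀ x, (P x : Matrix (Fin d) (Fin d) ℝ).det = 1 ∨
        (P x : Matrix (Fin d) (Fin d) ℝ).det = -1) ∧
      ∀ m : Measure (X × Proj d), IsProbabilityMeasure m → m.map Prod.fst = μ →
        (∀ᵐ i ∂p, m.map (skew (f i) fun x => (P (f i x))⁻¹ * A i x * P x) = m) →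
        m = μ.prod (m.map Prod.snd) := by
  let S : Set (Measure (X × Proj d)) := {m | IsProbabilityMeasure m ∧ m.map Prod.fst = μ ∧
    ∀ᵐ i ∂p, m.map (skew (f i) (A i)) = m}
  obtain ⟨D, hDS, hDc, hD⟩ := exists_countable_determining (μ := μ) S fun m hm => hm.2.1
  have : Countable D := hDc
  choose κ hκ hκm using fun k : D => exists_compProd_eq (hDS k.2).1 (hDS k.2).2.1
  let z : X → D → ProbabilityMeasure (Proj d) := fun x k => ⟨κ k x, inferInstance⟩
  have hz : @Measurable _ _ _ (borel _) z := measurable_borel_pi_probabilityMeasure fun k φ =>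
    (φ.continuous.measurable.stronglyMeasurable.integral_kernel (κ := κ k)).measurable
  have hequi : ∀ᵐ i ∂p, ∀ᵐ x ∂μ, ∃ g : GL (Fin d) ℝ, g • z x = z (f i x) := by
    have h1 : ∀ᵐ i ∂p, ∀ k : D, (k : Measure (X × Proj d)).map (skew (f i) (A i)) = k :=
      ae_all_iff.2 fun k => (hDS k.2).2.2
    filter_upwards [h1, hfp] with i hi hfi
    have h2 : ∀ᵐ x ∂μ, ∀ k, (κ k x).map (fun q => A i x • q) = κ k (f i x) :=
      ae_all_iff.2 fun k => ae_map_eq_of_map_skew_eq hfi.1.1 hfi.2 (hA i) (by rw [hκm, hi])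
    filter_upwards [h2] with x hx
    refine ⟨A i x, funext fun k => Subtype.ext ?_⟩
    exact (coe_smul_probabilityMeasure _ _).trans (hx k)
  obtain ⟨z₀, hz₀⟩ := exists_ae_smul_eq hPr hf herg hz hequi
  obtain ⟨s, hs, hsz⟩ := exists_measurable_smul_eq hz z₀
  obtain ⟨P, hP, hdet, hPs⟩ := exists_det_normalized hs
  have hPm : Measurable P := measurable_gl_iff.2 hP
  have hPz : ∀ᵐ x ∂μ, ∀ k, κ k x = (z₀ k : Measure (Proj d)).map fun q => P x • q := by
    filter_upwards [hz₀] with x hx k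
    have h1 : ((s x • z₀) k : Measure (Proj d)) = κ k x := by rw [hsz x hx]; rfl
    rw [← h1]
    simp_rw [hPs]
    rfl
  refine ⟨P, hPm, hdet, fun m hm hmμ hinv => ?_⟩
  have hΦ : Measurable (skew id P : X × Proj d → _) := measurable_skew measurable_id hPm
  have hm'S : m.map (skew id P) ∈ S := by
    refine ⟨Measure.isProbabilityMeasure_map hΦ.aemeasurable, ?_, ?_⟩
    · rw [Measure.map_map measurable_fst hΦ]
      exact hmμ
    · filter_upwards [hinv, hfp] with i hi hfi
      have hB : Measurable (skew (f i) fun x => (P (f i x))⁻¹ * A i x * P x) :=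
        measurable_skew hfi.2.measurable
          (((hPm.comp hfi.2.measurable).inv.mul (hA i)).mul hPm)
      rw [Measure.map_map (measurable_skew hfi.2.measurable (hA i)) hΦ]
      conv_rhs => rw [← hi]
      rw [Measure.map_map hΦ hB]
      congr 1
      funext q
      simp [skew, smul_smul, mul_assoc]
  refine eq_prod_of_integral_eq fun C hC φ => ?_
  obtain ⟨Φ, hΦφ⟩ := continuous_comp_inv_smul φ
  let h : X → ℝ := fun x => C.indicator (fun _ => 1) x - μ.real C
  have hh : Measurable h := (measurable_const.indicator hC).sub_const _
  have hhi : Integrable h μ :=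
    ((integrable_const 1).indicator hC).sub (integrable_const _)
  have hh0 : ∫ x, h x ∂μ = 0 := by
    simp only [h]
    rw [integral_sub ((integrable_const 1).indicator hC) (integrable_const _),
      integral_indicator hC]
    simp
  let ψ : X → C(Proj d, ℝ) := fun x => h x • Φ (P x)
  have hψm : StronglyMeasurable ψ := hh.stronglyMeasurable.smul
    (Φ.continuous.comp_stronglyMeasurable hPm.stronglyMeasurable)
  have hψ : Integrable ψ μ := by
    refine (hhi.norm.mul_const ‖φ‖).mono' hψm.aestronglyMeasurable (Eventually.of_forall fun x => ?_)
    rw [norm_smul]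
    gcongr
    refine (ContinuousMap.norm_le _ (norm_nonneg _)).2 fun q => ?_
    rw [hΦφ]
    exact φ.norm_coe_le_norm _
  have hfinal := hD _ hm'S ψ hψ fun b hb => ?_
  · rw [integral_map hΦ.aemeasurable (stronglyMeasurable_eval hψm).aestronglyMeasurable] at hfinal
    rw [← hfinal]
    refine integral_congr_ae (Eventually.of_forall fun q => ?_)
    simp [ψ, h, skew, hΦφ]
  · have hb' := hκm ⟨b, hb⟩
    have hi := integrable_eval (hDS hb).2.1 hψm hψ
    rw [← show μ ⊗ₘ κ ⟨b, hb⟩ = b from hb'] at hi ⊢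
    rw [Measure.integral_compProd hi]
    have : ∀ᵐ x ∂μ, ∫ q, ψ x q ∂(κ ⟨b, hb⟩ x) =
        h x * ∫ q, φ q ∂(z₀ ⟨b, hb⟩ : Measure (Proj d)) := by
      filter_upwards [hPz] with x hx
      rw [hx, integral_map (measurable_smul_proj _).aemeasurable
        (ψ x).continuous.measurable.aestronglyMeasurable]
      simp [ψ, hΦφ, integral_const_mul]
    rw [integral_congr_ae this, integral_mul_const, hh0, zero_mul]

end

end RandomCocycle

/-- Every random `GL(d,ℝ)`-valued cocycle is cohomologous (via a measurable
`SL±(d)`-valued conjugacy `P`) to a random cocycle all of whose invariant probability measures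
on `X × ℙ(ℝ^d)` are product measures. -/
theorem stmt0 {d : ℕ}
    {X : Type*} [MeasurableSpace X] [StandardBorelSpace X]
    (μ : Measure X) [IsProbabilityMeasure μ]
    {Y : Type*} [MeasurableSpace Y] (p : Measure Y) [IsProbabilityMeasure p]
    (Pr : Measure (ℤ → Y)) [IsProbabilityMeasure Pr] (hPr : IsBernoulli p Pr)
    (f : Y → X → X) (A : Y → X → GL (Fin d) ℝ)
    (hf : Measurable fun q : Y × X => f q.1 q.2)
    (hfp : ∀ᵐ i ∂p, Function.Bijective (f i) ∧ MeasurePreserving (f i) μ μ)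
    (hA : Measurable fun q : Y × X => ((A q.1 q.2 : Matrix (Fin d) (Fin d) ℝ)))
    (herg : Ergodic (fbar f) (Pr.prod μ))
    :
    ∃ P : X → GL (Fin d) ℝ,
      Measurable (fun x => ((P x : Matrix (Fin d) (Fin d) ℝ))) ∧
      (∀ x, (P x : Matrix (Fin d) (Fin d) ℝ).det = 1 ∨
            (P x : Matrix (Fin d) (Fin d) ℝ).det = -1) ∧
      ∀ μhat : Measure (X × Proj d), IsProbabilityMeasure μhat →
        μhat.map Prod.fst = μ →
        (∀ᵐ i ∂p, μhat.map (fun q : X × Proj d =>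
            (f i q.1, projAction ((P (f i q.1))⁻¹ * A i q.1 * P q.1) q.2)) = μhat) →
        ∃ ν : Measure (Proj d), IsProbabilityMeasure ν ∧ μhat = μ.prod ν := by
  have hA' : ∀ i, Measurable (A i) := fun i =>
    RandomCocycle.measurable_gl_iff.2 (hA.comp measurable_prodMk_left)
  obtain ⟨P, hP, hdet, hprod⟩ := RandomCocycle.exists_conjugacy hPr hf hfp hA' herg
  refine ⟨P, RandomCocycle.measurable_gl_iff.1 hP, hdet, fun μhat hμhat hfst hinv => ?_⟩
  exact ⟨μhat.map Prod.snd, Measure.isProbabilityMeasure_map measurable_snd.aemeasurable,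
    hprod μhat hμhat hfst hinv⟩
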